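/- For any weak solution (X₁(·),X₂(·)) of the system (1.1)–(1.2), the set of times at which the two components coincide is almost surely Lebesgue-null: ℙ( Leb{ 0 ≤ t < ∞ : X₁(t) = X₂(t) } = 0 ) = 1. -/

import Mathlib

open MeasureTheory ProbabilityTheory Filter Set

noncomputable section

namespace SDEPaper

/-- The signum convention of the paper: `psgn y = 1` for `y > 0`, `= -1` for `y ≤ 0`. -/
def psgn (y : ℝ) : ℝ := if 0 < y then 1 else -1

variable {Ω : Type*} [m : MeasurableSpace Ω]

/-- The σ-algebra generated by the process `Ξ` on the time interval `[0, t]`. -/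
def natSA {E : Type*} [MeasurableSpace E] (Ξ : ℝ → Ω → E) (t : ℝ) : MeasurableSpace Ω :=
  ⨆ s ∈ Icc (0 : ℝ) t, MeasurableSpace.comap (Ξ s) inferInstance

/-- The `μ`-augmentation of a σ-algebra. -/
def augSA (μ : Measure Ω) (m' : MeasurableSpace Ω) : MeasurableSpace Ω :=
  m' ⊔ MeasurableSpace.generateFrom {A : Set Ω | μ A = 0}

/-- `𝔉^Ξ(t)`: the `μ`-augmented σ-algebra generated by the process `Ξ` up to time `t`. -/
def natFilt {E : Type*} [MeasurableSpace E] (μ : Measure Ω) (Ξ : ℝ → Ω → E) (t : ℝ) :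
    MeasurableSpace Ω := augSA μ (natSA Ξ t)

/-- Dyadic left-point Riemann sum of `H` against `X` on `[0,t]`. -/
def rsum (H X : ℝ → Ω → ℝ) (t : ℝ) (n : ℕ) (ω : Ω) : ℝ :=
  ∑ i ∈ Finset.range (2 ^ n),
    H (t * i / 2 ^ n) ω * (X (t * (i + 1) / 2 ^ n) ω - X (t * i / 2 ^ n) ω)

/-- `I = ∫₀^· H dX`: dyadic Riemann sums converge in probability, and `I 0 = 0` a.s. -/
def IsSI (μ : Measure Ω) (H X I : ℝ → Ω → ℝ) : Prop :=
  (∀ᵐ ω ∂μ, I 0 ω = 0) ∧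
  ∀ t : ℝ, 0 ≤ t → TendstoInMeasure μ (fun n => rsum H X t n) atTop (I t)

/-- `I = ∫₀^· H₁ dX₁ + ∫₀^· H₂ dX₂` in the sense of convergence in probability
of dyadic Riemann sums. -/
def IsSI2 (μ : Measure Ω) (H₁ X₁ H₂ X₂ I : ℝ → Ω → ℝ) : Prop :=
  (∀ᵐ ω ∂μ, I 0 ω = 0) ∧
  ∀ t : ℝ, 0 ≤ t →
    TendstoInMeasure μ (fun n ω => rsum H₁ X₁ t n ω + rsum H₂ X₂ t n ω) atTop (I t)

/-- Dyadic sums of products of increments. -/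
def qsum (X Y : ℝ → Ω → ℝ) (t : ℝ) (n : ℕ) (ω : Ω) : ℝ :=
  ∑ i ∈ Finset.range (2 ^ n),
    (X (t * (i + 1) / 2 ^ n) ω - X (t * i / 2 ^ n) ω) *
      (Y (t * (i + 1) / 2 ^ n) ω - Y (t * i / 2 ^ n) ω)

/-- `C = ⟨X,Y⟩`: the quadratic covariation, as a limit in probability of dyadic sums. -/
def IsQV (μ : Measure Ω) (X Y C : ℝ → Ω → ℝ) : Prop :=
  ∀ t : ℝ, 0 ≤ t → TendstoInMeasure μ (fun n => qsum X Y t n) atTop (C t)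

/-- `W` is a standard one-dimensional Brownian motion with respect to the family of
σ-algebras `F` (a filtration contained in the ambient σ-algebra). -/
structure IsBM (μ : Measure Ω) (F : ℝ → MeasurableSpace Ω) (W : ℝ → Ω → ℝ) : Prop where
  le : ∀ t : ℝ, F t ≤ m
  mono : Monotone F
  adapted : ∀ t : ℝ, 0 ≤ t → MeasurableSpace.comap (W t) inferInstance ≤ F t
  init : ∀ᵐ ω ∂μ, W 0 ω = 0
  cont : ∀ᵐ ω ∂μ, Continuous fun t => W t ω
  law : ∀ s t : ℝ, 0 ≤ s → s ≤ t →
    μ.map (fun ω => W t ω - W s ω) = gaussianReal 0 ((t - s).toNNReal)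
  indep : ∀ s t : ℝ, 0 ≤ s → s ≤ t →
    Indep (MeasurableSpace.comap (fun ω => W t ω - W s ω) inferInstance) (F s) μ

/-- `(B₁, B₂)` is a planar Brownian motion: two independent standard Brownian motions
with respect to the common filtration `F`. -/
def IsPlanarBM (μ : Measure Ω) (F : ℝ → MeasurableSpace Ω) (B₁ B₂ : ℝ → Ω → ℝ) : Prop :=
  IsBM μ F B₁ ∧ IsBM μ F B₂ ∧
    IndepFun (fun ω => (fun t => B₁ t ω)) (fun ω => (fun t => B₂ t ω)) μ

/-- `L` is the (right) local time at the origin of the process `Y`: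
`L t = lim_{ε ↓ 0} (4ε)⁻¹ ∫₀ᵗ 1{|Y(s)| < ε} ds`. -/
def IsLocalTime (μ : Measure Ω) (Y L : ℝ → Ω → ℝ) : Prop :=
  ∀ᵐ ω ∂μ, ∀ t : ℝ, 0 ≤ t →
    Tendsto (fun ε : ℝ =>
        (4 * ε)⁻¹ * ∫ s in (0:ℝ)..t, (if |Y s ω| < ε then (1:ℝ) else 0))
      (nhdsWithin 0 (Ioi 0)) (nhds (L t ω))

/-- A continuous local martingale with respect to the filtration `F`. -/
def IsContLocMart (μ : Measure Ω) (F : Filtration ℝ m) (M : ℝ → Ω → ℝ) : Prop :=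
  (∀ᵐ ω ∂μ, Continuous fun t => M t ω) ∧ StronglyAdapted F M ∧
    ∃ τ : ℕ → Ω → ℝ, (∀ n, IsStoppingTime F (fun ω => (τ n ω : WithTop ℝ))) ∧
      (∀ᵐ ω ∂μ, Tendsto (fun n => τ n ω) atTop atTop) ∧
      ∀ n, Martingale (fun t ω => M (min t (τ n ω)) ω) F μ

/-- Orthogonality: the cross-variation `⟨M,N⟩` vanishes identically. -/
def Orthogonal (μ : Measure Ω) (M N : ℝ → Ω → ℝ) : Prop :=
  IsQV μ M N fun _ _ => 0

/-- Domination: `⟨M⟩(t) = ∫₀ᵗ q(s) d⟨N⟩(s)` for a progressively measurable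
process `q` with values in `[0,c]`. -/
def Dominated (μ : Measure Ω) (F : Filtration ℝ m) (M N : ℝ → Ω → ℝ) (c : ℝ) : Prop :=
  ∃ QM QN q : ℝ → Ω → ℝ, IsQV μ M M QM ∧ IsQV μ N N QN ∧
    ProgMeasurable F q ∧ (∀ t ω, q t ω ∈ Icc (0:ℝ) c) ∧
    ∀ᵐ ω ∂μ, ∃ ν : Measure ℝ,
      (∀ a b : ℝ, 0 ≤ a → a ≤ b → ν (Ioc a b) = ENNReal.ofReal (QN b ω - QN a ω)) ∧
      ∀ t : ℝ, 0 ≤ t → QM t ω = ∫ s in Ioc (0:ℝ) t, q s ω ∂ν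

/-- The law of the two-dimensional process `(X₁, X₂)` on path space. -/
def pathLaw (μ : Measure Ω) (X₁ X₂ : ℝ → Ω → ℝ) : Measure (ℝ → ℝ × ℝ) :=
  μ.map fun ω => (fun t => (X₁ t ω, X₂ t ω))
/-- `(X₁, X₂)` solves the system (1.1)-(1.2) driven by `(B₁, B₂)`. -/
def Solves11 (μ : Measure Ω) (F : ℝ → MeasurableSpace Ω) (g h ρ σ x₁ x₂ : ℝ)
    (B₁ B₂ X₁ X₂ : ℝ → Ω → ℝ) : Prop :=
  (∀ t : ℝ, 0 ≤ t →
    MeasurableSpace.comap (fun ω => (X₁ t ω, X₂ t ω)) inferInstance ≤ F t) ∧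
  (∀ᵐ ω ∂μ, Continuous (fun t => X₁ t ω) ∧ Continuous (fun t => X₂ t ω)) ∧
  ∃ I₁ I₂ : ℝ → Ω → ℝ,
    IsSI μ (fun s ω => if X₁ s ω ≤ X₂ s ω then σ else ρ) B₁ I₁ ∧
    IsSI μ (fun s ω => if X₁ s ω ≤ X₂ s ω then ρ else σ) B₂ I₂ ∧
    ∀ᵐ ω ∂μ, ∀ t : ℝ, 0 ≤ t →
      X₁ t ω = x₁ + (∫ s in (0:ℝ)..t, (if X₁ s ω ≤ X₂ s ω then g else -h)) + I₁ t ω ∧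
      X₂ t ω = x₂ + (∫ s in (0:ℝ)..t, (if X₁ s ω ≤ X₂ s ω then -h else g)) + I₂ t ω

/-- `(X₁, X₂)` solves the system (4.7)-(4.8), driven by the single Brownian motion `W`. -/
def Solves47 (μ : Measure Ω) (F : ℝ → MeasurableSpace Ω) (g h x₁ x₂ : ℝ)
    (W X₁ X₂ : ℝ → Ω → ℝ) : Prop :=
  (∀ t : ℝ, 0 ≤ t →
    MeasurableSpace.comap (fun ω => (X₁ t ω, X₂ t ω)) inferInstance ≤ F t) ∧
  (∀ᵐ ω ∂μ, Continuous (fun t => X₁ t ω) ∧ Continuous (fun t => X₂ t ω)) ∧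
  ∃ I₁ I₂ : ℝ → Ω → ℝ,
    IsSI μ (fun s ω => if X₁ s ω ≤ X₂ s ω then (0:ℝ) else 1) W I₁ ∧
    IsSI μ (fun s ω => if X₁ s ω ≤ X₂ s ω then (-1:ℝ) else 0) W I₂ ∧
    ∀ᵐ ω ∂μ, ∀ t : ℝ, 0 ≤ t →
      X₁ t ω = x₁ + (∫ s in (0:ℝ)..t, (if X₁ s ω ≤ X₂ s ω then g else -h)) + I₁ t ω ∧
      X₂ t ω = x₂ + (∫ s in (0:ℝ)..t, (if X₁ s ω ≤ X₂ s ω then -h else g)) + I₂ t ω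

/-- `(X₁, X₂)` solves the system (4.9)-(4.10), driven by the single Brownian motion `V`. -/
def Solves49 (μ : Measure Ω) (F : ℝ → MeasurableSpace Ω) (g h x₁ x₂ : ℝ)
    (V X₁ X₂ : ℝ → Ω → ℝ) : Prop :=
  (∀ t : ℝ, 0 ≤ t →
    MeasurableSpace.comap (fun ω => (X₁ t ω, X₂ t ω)) inferInstance ≤ F t) ∧
  (∀ᵐ ω ∂μ, Continuous (fun t => X₁ t ω) ∧ Continuous (fun t => X₂ t ω)) ∧
  ∃ I₁ I₂ : ℝ → Ω → ℝ,
    IsSI μ (fun s ω => if X₁ s ω ≤ X₂ s ω then (0:ℝ) else 1) V I₁ ∧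
    IsSI μ (fun s ω => if X₁ s ω ≤ X₂ s ω then (1:ℝ) else 0) V I₂ ∧
    ∀ᵐ ω ∂μ, ∀ t : ℝ, 0 ≤ t →
      X₁ t ω = x₁ + (∫ s in (0:ℝ)..t, (if X₁ s ω ≤ X₂ s ω then g else -h)) + I₁ t ω ∧
      X₂ t ω = x₂ + (∫ s in (0:ℝ)..t, (if X₁ s ω ≤ X₂ s ω then -h else g)) + I₂ t ω

/-- `(X₁, X₂)` solves the system (2.12)-(2.13), driven by the planar BM `(W₁, W₂)`. -/
def Solves212 (μ : Measure Ω) (F : ℝ → MeasurableSpace Ω) (g h ρ σ x₁ x₂ : ℝ)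
    (W₁ W₂ X₁ X₂ : ℝ → Ω → ℝ) : Prop :=
  (∀ t : ℝ, 0 ≤ t →
    MeasurableSpace.comap (fun ω => (X₁ t ω, X₂ t ω)) inferInstance ≤ F t) ∧
  (∀ᵐ ω ∂μ, Continuous (fun t => X₁ t ω) ∧ Continuous (fun t => X₂ t ω)) ∧
  ∃ I₁ I₂ : ℝ → Ω → ℝ,
    IsSI2 μ (fun s ω => if X₁ s ω ≤ X₂ s ω then 0 else ρ) W₁
            (fun s ω => if X₁ s ω ≤ X₂ s ω then σ else 0) W₂ I₁ ∧
    IsSI2 μ (fun s ω => if X₁ s ω ≤ X₂ s ω then -ρ else 0) W₁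
            (fun s ω => if X₁ s ω ≤ X₂ s ω then 0 else -σ) W₂ I₂ ∧
    ∀ᵐ ω ∂μ, ∀ t : ℝ, 0 ≤ t →
      X₁ t ω = x₁ + (∫ s in (0:ℝ)..t, (if X₁ s ω ≤ X₂ s ω then g else -h)) + I₁ t ω ∧
      X₂ t ω = x₂ + (∫ s in (0:ℝ)..t, (if X₁ s ω ≤ X₂ s ω then -h else g)) + I₂ t ω

/-- `(X₁, X₂)` solves the system (2.14)-(2.15), driven by the planar BM `(V₁, V₂)`. -/
def Solves214 (μ : Measure Ω) (F : ℝ → MeasurableSpace Ω) (g h ρ σ x₁ x₂ : ℝ)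
    (V₁ V₂ X₁ X₂ : ℝ → Ω → ℝ) : Prop :=
  (∀ t : ℝ, 0 ≤ t →
    MeasurableSpace.comap (fun ω => (X₁ t ω, X₂ t ω)) inferInstance ≤ F t) ∧
  (∀ᵐ ω ∂μ, Continuous (fun t => X₁ t ω) ∧ Continuous (fun t => X₂ t ω)) ∧
  ∃ I₁ I₂ : ℝ → Ω → ℝ,
    IsSI2 μ (fun s ω => if X₁ s ω ≤ X₂ s ω then 0 else ρ) V₁
            (fun s ω => if X₁ s ω ≤ X₂ s ω then σ else 0) V₂ I₁ ∧
    IsSI2 μ (fun s ω => if X₁ s ω ≤ X₂ s ω then ρ else 0) V₁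
            (fun s ω => if X₁ s ω ≤ X₂ s ω then 0 else σ) V₂ I₂ ∧
    ∀ᵐ ω ∂μ, ∀ t : ℝ, 0 ≤ t →
      X₁ t ω = x₁ + (∫ s in (0:ℝ)..t, (if X₁ s ω ≤ X₂ s ω then g else -h)) + I₁ t ω ∧
      X₂ t ω = x₂ + (∫ s in (0:ℝ)..t, (if X₁ s ω ≤ X₂ s ω then -h else g)) + I₂ t ω

/-- `(X₁, X₂)` solves the system `dX = Σ(X) dU + G(X) dt` of (eq:xSigma), where
`Σ(x) = Σ₊ 1{x₁ > x₂} + Σ₋ 1{x₁ ≤ x₂}`. -/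
def SolvesGen (μ : Measure Ω) (F : ℝ → MeasurableSpace Ω) (g h : ℝ)
    (Sp Sm : Matrix (Fin 2) (Fin 2) ℝ) (x₁ x₂ : ℝ)
    (U₁ U₂ X₁ X₂ : ℝ → Ω → ℝ) : Prop :=
  (∀ t : ℝ, 0 ≤ t →
    MeasurableSpace.comap (fun ω => (X₁ t ω, X₂ t ω)) inferInstance ≤ F t) ∧
  (∀ᵐ ω ∂μ, Continuous (fun t => X₁ t ω) ∧ Continuous (fun t => X₂ t ω)) ∧
  ∃ I₁ I₂ : ℝ → Ω → ℝ,
    IsSI2 μ (fun s ω => if X₁ s ω ≤ X₂ s ω then Sm 0 0 else Sp 0 0) U₁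
            (fun s ω => if X₁ s ω ≤ X₂ s ω then Sm 0 1 else Sp 0 1) U₂ I₁ ∧
    IsSI2 μ (fun s ω => if X₁ s ω ≤ X₂ s ω then Sm 1 0 else Sp 1 0) U₁
            (fun s ω => if X₁ s ω ≤ X₂ s ω then Sm 1 1 else Sp 1 1) U₂ I₂ ∧
    ∀ᵐ ω ∂μ, ∀ t : ℝ, 0 ≤ t →
      X₁ t ω = x₁ + (∫ s in (0:ℝ)..t, (if X₁ s ω ≤ X₂ s ω then g else -h)) + I₁ t ω ∧
      X₂ t ω = x₂ + (∫ s in (0:ℝ)..t, (if X₁ s ω ≤ X₂ s ω then -h else g)) + I₂ t ω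

/-!
The difference `D = X₁ - X₂` is the sum of a drift that is Lipschitz in time and of a stochastic
integral `I` whose integrand has squared length `ρ² + σ²` everywhere. Over the last interval of
length `δ` before a time `T > 0`, the increment of `I` behaves, given the past, like a centred
Gaussian variable of variance `(ρ² + σ²) δ`: the characteristic function of `V + (I T - I (T - δ))`
is bounded by `exp (-(ρ² + σ²) δ θ² / 2)` for every `V` known at time `T - δ`, as one sees on the
dyadic Riemann sums by a second-order Taylor expansion of each step. A law with such a
characteristic function gives mass `O(δ / √δ)` to the interval `|y| ≤ C δ`, and on the event
`D T = 0` the drift confines `D (T - δ) + (I T - I (T - δ))` to such an interval. Letting `δ → 0`,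
`D T ≠ 0` almost surely, and Fubini's theorem exchanges time and chance.
-/

/-! ### Small balls and characteristic functions -/

lemma integral_charFun_comm (μ ν : Measure ℝ) [IsFiniteMeasure μ] [IsFiniteMeasure ν] :
    ∫ y, charFun μ y ∂ν = ∫ θ, charFun ν θ ∂μ := by
  simp only [charFun_apply_real]
  rw [integral_integral_swap]
  · simp only [mul_comm]
  · refine (integrable_const (1 : ℝ)).mono' (by fun_prop) (ae_of_all _ fun p => ?_)
    rw [Function.uncurry_apply_pair, ← Complex.ofReal_mul, Complex.norm_exp_ofReal_mul_I]

lemma charFun_gaussianReal_zero_sq (a y : ℝ) :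
    charFun (gaussianReal 0 (a ^ 2).toNNReal) y = (Real.exp (-(a * y) ^ 2 / 2) : ℝ) := by
  rw [charFun_gaussianReal, Real.coe_toNNReal _ (sq_nonneg a)]
  push_cast
  congr 1
  ring

lemma measureReal_abs_le_le_integral_norm_charFun (ν : Measure ℝ) [IsFiniteMeasure ν]
    {c : ℝ} (hc : 0 < c) :
    ν.real {y | |y| ≤ c} ≤
      Real.exp (1 / 2) * ∫ θ, ‖charFun ν θ‖ ∂(gaussianReal 0 (c⁻¹ ^ 2).toNNReal) := by
  set γ := gaussianReal 0 (c⁻¹ ^ 2).toNNReal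
  have hint : Integrable (fun y => Real.exp (1 / 2) * Real.exp (-(c⁻¹ * y) ^ 2 / 2)) ν :=
    .of_bound (by fun_prop) (Real.exp (1 / 2)) (ae_of_all _ fun y => by
      rw [← Real.exp_add, Real.norm_of_nonneg (by positivity)]
      gcongr
      linarith [sq_nonneg (c⁻¹ * y)])
  have hindicator : {y : ℝ | |y| ≤ c}.indicator 1
      ≤ fun y => Real.exp (1 / 2) * Real.exp (-(c⁻¹ * y) ^ 2 / 2) := by
    refine indicator_le' (fun y hy => ?_) fun y _ => by positivity
    rw [← Real.exp_add, Pi.one_apply]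
    have : (c⁻¹ * y) ^ 2 ≤ 1 := by
      rw [sq_le_one_iff_abs_le_one, abs_mul, abs_of_pos (inv_pos.2 hc)]
      exact inv_mul_le_one_of_le₀ hy hc.le
    exact Real.one_le_exp (by linarith)
  have hmeas : MeasurableSet {y : ℝ | |y| ≤ c} := measurableSet_le (by fun_prop) (by fun_prop)
  calc ν.real {y | |y| ≤ c}
      = ∫ y, {y : ℝ | |y| ≤ c}.indicator 1 y ∂ν := (integral_indicator_one hmeas).symm
    _ ≤ ∫ y, Real.exp (1 / 2) * Real.exp (-(c⁻¹ * y) ^ 2 / 2) ∂ν :=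
        integral_mono ((integrable_indicator_iff hmeas).2 (integrable_const _).integrableOn)
          hint hindicator
    _ = Real.exp (1 / 2) * ‖∫ y, charFun γ y ∂ν‖ := by
        simp_rw [integral_const_mul, γ, charFun_gaussianReal_zero_sq, integral_complex_ofReal,
          Complex.norm_real, Real.norm_of_nonneg (integral_nonneg fun _ => (Real.exp_pos _).le)]
    _ ≤ Real.exp (1 / 2) * ∫ θ, ‖charFun ν θ‖ ∂γ := by
        rw [integral_charFun_comm]
        gcongr
        exact norm_integral_le_integral_norm _

lemma integral_exp_neg_gaussianReal_le {v w : ℝ} (hv : 0 < v) (hw : 0 < w) :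
    ∫ θ, Real.exp (-(v * θ ^ 2 / 2)) ∂(gaussianReal 0 w.toNNReal) ≤ (√(v * w))⁻¹ := by
  have hw' : w.toNNReal ≠ 0 := by simpa using hw
  have hpdf (θ : ℝ) : gaussianPDFReal 0 w.toNNReal θ ≤ (√(2 * Real.pi * w))⁻¹ := by
    rw [gaussianPDFReal, Real.coe_toNNReal _ hw.le]
    refine mul_le_of_le_one_right (by positivity) (Real.exp_le_one_iff.2 ?_)
    rw [neg_div, neg_nonpos]
    positivity
  have hexp (θ : ℝ) : Real.exp (-(v * θ ^ 2 / 2)) = Real.exp (-(v / 2) * θ ^ 2) := by ring_nf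
  simp only [hexp]
  rw [integral_gaussianReal_eq_integral_smul hw']
  calc ∫ θ, gaussianPDFReal 0 w.toNNReal θ • Real.exp (-(v / 2) * θ ^ 2)
      ≤ ∫ θ, (√(2 * Real.pi * w))⁻¹ * Real.exp (-(v / 2) * θ ^ 2) := by
        refine integral_mono_of_nonneg
          (ae_of_all _ fun θ => mul_nonneg (gaussianPDFReal_nonneg _ _ _) (Real.exp_pos _).le)
          ((integrable_exp_neg_mul_sq (half_pos hv)).const_mul _) (ae_of_all _ fun θ => ?_)
        exact mul_le_mul_of_nonneg_right (hpdf θ) (Real.exp_pos _).le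
    _ = (√(v * w))⁻¹ := by
        rw [integral_const_mul, integral_gaussian, ← Real.sqrt_inv, ← Real.sqrt_inv,
          ← Real.sqrt_mul (by positivity)]
        congr 1
        field_simp

lemma measureReal_abs_le_le_of_norm_charFun_le (ν : Measure ℝ) [IsFiniteMeasure ν]
    {c v : ℝ} (hc : 0 < c) (hv : 0 < v)
    (hν : ∀ θ, ‖charFun ν θ‖ ≤ Real.exp (-(v * θ ^ 2 / 2))) :
    ν.real {y | |y| ≤ c} ≤ Real.exp (1 / 2) * (c / √v) := by
  refine (measureReal_abs_le_le_integral_norm_charFun ν hc).trans ?_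
  gcongr
  calc ∫ θ, ‖charFun ν θ‖ ∂(gaussianReal 0 (c⁻¹ ^ 2).toNNReal)
      ≤ ∫ θ, Real.exp (-(v * θ ^ 2 / 2)) ∂(gaussianReal 0 (c⁻¹ ^ 2).toNNReal) :=
        integral_mono_of_nonneg (ae_of_all _ fun θ => norm_nonneg _)
          (.of_bound (by fun_prop) 1 (ae_of_all _ fun θ => by
            rw [Real.norm_of_nonneg (Real.exp_pos _).le, Real.exp_le_one_iff, neg_nonpos]
            positivity))
          (ae_of_all _ hν)
    _ ≤ (√(v * c⁻¹ ^ 2))⁻¹ := integral_exp_neg_gaussianReal_le hv (by positivity)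
    _ = c / √v := by
        rw [Real.sqrt_mul hv.le, Real.sqrt_sq (inv_nonneg.2 hc.le), mul_inv, inv_inv, mul_comm,
          div_eq_mul_inv]

/-! ### Brownian increments -/

/-- The third absolute moment of the standard Gaussian law. Only its finiteness matters: it is the
constant in the error term of the second-order expansion of characteristic functions. -/
def gaussianAbsMomentThree : ℝ := ∫ x, |x| ^ 3 ∂(gaussianReal 0 1)

lemma gaussianAbsMomentThree_nonneg : 0 ≤ gaussianAbsMomentThree :=
  integral_nonneg fun _ => by positivity

lemma integral_abs_pow_three_gaussianReal (v : NNReal) :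
    ∫ x, |x| ^ 3 ∂(gaussianReal 0 v) = √v ^ 3 * gaussianAbsMomentThree := by
  have hscale : gaussianReal 0 v = (gaussianReal 0 1).map (√v * ·) := by
    rw [gaussianReal_map_const_mul, mul_zero, mul_one]
    congr
    exact NNReal.eq (Real.sq_sqrt v.2).symm
  rw [hscale, integral_map (by fun_prop) (by fun_prop), gaussianAbsMomentThree,
    ← integral_const_mul]
  simp only [abs_mul, abs_of_nonneg (Real.sqrt_nonneg _), mul_pow]

lemma integral_sq_gaussianReal (v : NNReal) : ∫ x, x ^ 2 ∂(gaussianReal 0 v) = v := by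
  have hvar := variance_fun_id_gaussianReal (μ := 0) (v := v)
  rw [variance_eq_integral (by fun_prop)] at hvar
  simpa using hvar

section Brownian

variable {μ : Measure Ω} {F : ℝ → MeasurableSpace Ω} {W B₁ B₂ : ℝ → Ω → ℝ} {s t : ℝ}
  {E : Type*} [NormedAddCommGroup E] [NormedSpace ℝ E]

lemma IsBM.measurable_of_le (hW : IsBM μ F W) (hs : 0 ≤ s) (hst : s ≤ t) :
    Measurable[F t] (W s) :=
  measurable_iff_comap_le.2 ((hW.adapted s hs).trans (hW.mono hst))

lemma IsBM.measurable (hW : IsBM μ F W) (ht : 0 ≤ t) : Measurable (W t) :=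
  (hW.measurable_of_le ht le_rfl).mono (hW.le t) le_rfl

lemma IsBM.hasLaw_sub (hW : IsBM μ F W) (hs : 0 ≤ s) (hst : s ≤ t) :
    HasLaw (fun ω => W t ω - W s ω) (gaussianReal 0 (t - s).toNNReal) μ where
  aemeasurable := ((hW.measurable (hs.trans hst)).sub (hW.measurable hs)).aemeasurable
  map_eq := hW.law s t hs hst

lemma IsBM.memLp_sub (hW : IsBM μ F W) (hs : 0 ≤ s) (hst : s ≤ t) {p : ENNReal} (hp : p ≠ ⊤) :
    MemLp (fun ω => W t ω - W s ω) p μ := by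
  have hlaw := hW.hasLaw_sub hs hst
  have hid := memLp_id_gaussianReal' (μ := 0) (v := (t - s).toNNReal) p hp
  rw [← hlaw.map_eq] at hid
  exact hid.comp_of_map hlaw.aemeasurable

lemma IsBM.integrable_sub_sq (hW : IsBM μ F W) (hs : 0 ≤ s) (hst : s ≤ t) :
    Integrable (fun ω => (W t ω - W s ω) ^ 2) μ :=
  (hW.memLp_sub hs hst ENNReal.ofNat_ne_top).integrable_sq

lemma IsBM.integrable_abs_sub_pow_three (hW : IsBM μ F W) (hs : 0 ≤ s) (hst : s ≤ t) :
    Integrable (fun ω => |W t ω - W s ω| ^ 3) μ :=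
  (hW.memLp_sub hs hst (p := (3 : ℕ)) (by simp)).integrable_norm_pow three_ne_zero

lemma IsBM.integral_sub (hW : IsBM μ F W) (hs : 0 ≤ s) (hst : s ≤ t) :
    ∫ ω, (W t ω - W s ω) ∂μ = 0 :=
  ((hW.hasLaw_sub hs hst).integral_comp (f := id) (by fun_prop)).trans integral_id_gaussianReal

lemma IsBM.integral_sub_sq (hW : IsBM μ F W) (hs : 0 ≤ s) (hst : s ≤ t) :
    ∫ ω, (W t ω - W s ω) ^ 2 ∂μ = t - s :=
  ((hW.hasLaw_sub hs hst).integral_comp (f := (· ^ 2)) (by fun_prop)).trans <|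
    (integral_sq_gaussianReal _).trans (Real.coe_toNNReal _ (sub_nonneg.2 hst))

lemma IsBM.integral_abs_sub_pow_three (hW : IsBM μ F W) (hs : 0 ≤ s) (hst : s ≤ t) :
    ∫ ω, |W t ω - W s ω| ^ 3 ∂μ = √(t - s) ^ 3 * gaussianAbsMomentThree := by
  have h := (hW.hasLaw_sub hs hst).integral_comp (f := fun x => |x| ^ 3) (by fun_prop)
  rwa [integral_abs_pow_three_gaussianReal, Real.coe_toNNReal _ (sub_nonneg.2 hst)] at h

lemma IsBM.integral_comp_sub_smul (hW : IsBM μ F W) (hs : 0 ≤ s) (hst : s ≤ t)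
    {φ : ℝ → ℝ} (hφ : Measurable φ) {η : Ω → E} (hη : StronglyMeasurable[F s] η) :
    ∫ ω, φ (W t ω - W s ω) • η ω ∂μ = (∫ ω, φ (W t ω - W s ω) ∂μ) • ∫ ω, η ω ∂μ := by
  borelize E
  have hincr := hW.hasLaw_sub hs hst
  have hindep : IndepFun (fun ω => W t ω - W s ω) η μ :=
    (IndepFun_iff_Indep _ _ _).2 <|
      indep_of_indep_of_le_right (hW.indep s t hs hst) hη.measurable.comap_le
  exact (hindep.comp hφ measurable_id).integral_fun_smul_eq_smul_integral
    (hφ.comp_aemeasurable hincr.aemeasurable).aestronglyMeasurable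
    (hη.mono (hW.le s)).aestronglyMeasurable

lemma IsBM.integral_sub_smul_eq_zero (hW : IsBM μ F W) (hs : 0 ≤ s) (hst : s ≤ t)
    {η : Ω → E} (hη : StronglyMeasurable[F s] η) :
    ∫ ω, (W t ω - W s ω) • η ω ∂μ = 0 := by
  rw [hW.integral_comp_sub_smul hs hst (φ := fun x => x) measurable_id hη, hW.integral_sub hs hst,
    zero_smul]

lemma IsBM.integral_sub_sq_smul (hW : IsBM μ F W) (hs : 0 ≤ s) (hst : s ≤ t)
    {η : Ω → E} (hη : StronglyMeasurable[F s] η) :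
    ∫ ω, (W t ω - W s ω) ^ 2 • η ω ∂μ = (t - s) • ∫ ω, η ω ∂μ := by
  rw [hW.integral_comp_sub_smul hs hst (φ := (· ^ 2)) (by fun_prop) hη, hW.integral_sub_sq hs hst]

lemma IsBM.stronglyMeasurable_sub (hW : IsBM μ F W) {r : ℝ} (hs : 0 ≤ s) (hst : s ≤ t)
    (htr : t ≤ r) : StronglyMeasurable[F r] fun ω => W t ω - W s ω :=
  Measurable.stronglyMeasurable <|
    (hW.measurable_of_le (hs.trans hst) htr).sub (hW.measurable_of_le hs (hst.trans htr))

lemma IsBM.integral_sub_mul_sub_of_le (hW : IsBM μ F W) {s' t' : ℝ} (hs : 0 ≤ s) (hst : s ≤ t)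
    (hts' : t ≤ s') (hst' : s' ≤ t') :
    ∫ ω, (W t ω - W s ω) * (W t' ω - W s' ω) ∂μ = 0 := by
  simp only [mul_comm (W t _ - W s _)]
  exact hW.integral_sub_smul_eq_zero ((hs.trans hst).trans hts') hst'
    (hW.stronglyMeasurable_sub hs hst hts')

lemma IsBM.integral_sub_mul_sub_of_ne (hW : IsBM μ F W) {u : ℕ → ℝ} (hu : Monotone u)
    (hu0 : 0 ≤ u 0) {j k : ℕ} (hjk : j ≠ k) :
    ∫ ω, (W (u (j + 1)) ω - W (u j) ω) * (W (u (k + 1)) ω - W (u k) ω) ∂μ = 0 := by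
  have hnonneg (i : ℕ) : 0 ≤ u i := hu0.trans (hu i.zero_le)
  rcases hjk.lt_or_gt with h | h
  · exact hW.integral_sub_mul_sub_of_le (hnonneg j) (hu j.le_succ) (hu h) (hu k.le_succ)
  · simp only [mul_comm (W (u (j + 1)) _ - W (u j) _)]
    exact hW.integral_sub_mul_sub_of_le (hnonneg k) (hu k.le_succ) (hu h) (hu j.le_succ)

/-! ### Orthogonality of the two driving motions given the past -/

/-- The sum of the products of the increments of `X` and `Y` along the partition `u`, which
approximates the cross-variation `⟨X, Y⟩` on `[u 0, u n]`; compare `qsum`, which is the case of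
dyadic partitions. -/
def crossSum (X Y : ℝ → Ω → ℝ) (u : ℕ → ℝ) (n : ℕ) (ω : Ω) : ℝ :=
  ∑ k ∈ Finset.range n, (X (u (k + 1)) ω - X (u k) ω) * (Y (u (k + 1)) ω - Y (u k) ω)

lemma IsPlanarBM.integrable_sub_mul_sub (hB : IsPlanarBM μ F B₁ B₂) {s' t' : ℝ}
    (hs : 0 ≤ s) (hst : s ≤ t) (hs' : 0 ≤ s') (hst' : s' ≤ t') :
    Integrable (fun ω => (B₁ t ω - B₁ s ω) * (B₂ t' ω - B₂ s' ω)) μ :=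
  (hB.1.memLp_sub hs hst (p := 2) ENNReal.ofNat_ne_top).integrable_mul
    (hB.2.1.memLp_sub hs' hst' (p := 2) ENNReal.ofNat_ne_top)

lemma IsPlanarBM.memLp_sub_mul_sub (hB : IsPlanarBM μ F B₁ B₂) (hs : 0 ≤ s) (hst : s ≤ t) :
    MemLp (fun ω => (B₁ t ω - B₁ s ω) * (B₂ t ω - B₂ s ω)) 2 μ := by
  have hφ : Measurable fun p : ℝ → ℝ => (p t - p s) ^ 2 := by fun_prop
  rw [memLp_two_iff_integrable_sq
    (hB.integrable_sub_mul_sub hs hst hs hst).aestronglyMeasurable]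
  simp only [mul_pow]
  exact (hB.2.2.comp hφ hφ).integrable_mul (hB.1.integrable_sub_sq hs hst)
    (hB.2.1.integrable_sub_sq hs hst)

lemma IsPlanarBM.memLp_crossSum (hB : IsPlanarBM μ F B₁ B₂) {u : ℕ → ℝ} (hu : Monotone u)
    (hu0 : 0 ≤ u 0) (n : ℕ) : MemLp (crossSum B₁ B₂ u n) 2 μ :=
  memLp_finsetSum _ fun k _ =>
    hB.memLp_sub_mul_sub (hu0.trans (hu k.zero_le)) (hu k.le_succ)

lemma IsPlanarBM.integral_sub_mul_sub_mul_sub_mul_sub (hB : IsPlanarBM μ F B₁ B₂) {s' t' : ℝ}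
    (hs : 0 ≤ s) (hst : s ≤ t) (hs' : 0 ≤ s') (hst' : s' ≤ t') :
    ∫ ω, ((B₁ t ω - B₁ s ω) * (B₂ t ω - B₂ s ω)) *
        ((B₁ t' ω - B₁ s' ω) * (B₂ t' ω - B₂ s' ω)) ∂μ =
      (∫ ω, (B₁ t ω - B₁ s ω) * (B₁ t' ω - B₁ s' ω) ∂μ) *
        ∫ ω, (B₂ t ω - B₂ s ω) * (B₂ t' ω - B₂ s' ω) ∂μ := by
  have hmeas {W : ℝ → Ω → ℝ} (hW : IsBM μ F W) :
      AEStronglyMeasurable (fun ω => (W t ω - W s ω) * (W t' ω - W s' ω)) μ :=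
    ((hW.hasLaw_sub hs hst).aemeasurable.mul
      (hW.hasLaw_sub hs' hst').aemeasurable).aestronglyMeasurable
  have hφ : Measurable fun p : ℝ → ℝ => (p t - p s) * (p t' - p s') := by fun_prop
  simp only [mul_mul_mul_comm (B₁ t _ - B₁ s _)]
  exact (hB.2.2.comp hφ hφ).integral_fun_mul_eq_mul_integral (hmeas hB.1) (hmeas hB.2.1)

lemma IsPlanarBM.integral_crossSum_sq (hB : IsPlanarBM μ F B₁ B₂) {u : ℕ → ℝ} (hu : Monotone u)
    (hu0 : 0 ≤ u 0) (n : ℕ) :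
    ∫ ω, crossSum B₁ B₂ u n ω ^ 2 ∂μ = ∑ k ∈ Finset.range n, (u (k + 1) - u k) ^ 2 := by
  have hnonneg (k : ℕ) : 0 ≤ u k := hu0.trans (hu k.zero_le)
  have hstep (k : ℕ) : u k ≤ u (k + 1) := hu k.le_succ
  have hprod (j k : ℕ) := hB.integral_sub_mul_sub_mul_sub_mul_sub
    (hnonneg j) (hstep j) (hnonneg k) (hstep k)
  have hint (j k : ℕ) : Integrable (fun ω =>
      ((B₁ (u (j + 1)) ω - B₁ (u j) ω) * (B₂ (u (j + 1)) ω - B₂ (u j) ω)) *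
        ((B₁ (u (k + 1)) ω - B₁ (u k) ω) * (B₂ (u (k + 1)) ω - B₂ (u k) ω))) μ :=
    (hB.memLp_sub_mul_sub (hnonneg j) (hstep j)).integrable_mul
      (hB.memLp_sub_mul_sub (hnonneg k) (hstep k))
  simp only [crossSum, sq (∑ _ ∈ _, _), Finset.sum_mul_sum]
  rw [integral_finsetSum _ fun j _ => integrable_finsetSum _ fun k _ => hint j k]
  refine Finset.sum_congr rfl fun j hj => ?_
  rw [integral_finsetSum _ fun k _ => hint j k, Finset.sum_eq_single_of_mem j hj]
  · rw [hprod]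
    simp only [← sq]
    rw [hB.1.integral_sub_sq (hnonneg j) (hstep j), hB.2.1.integral_sub_sq (hnonneg j) (hstep j),
      ← sq]
  · intro k _ hkj
    rw [hprod, hB.1.integral_sub_mul_sub_of_ne hu hu0 hkj.symm, zero_mul]

lemma IsPlanarBM.integral_sub_mul_sub_smul_add (hB : IsPlanarBM μ F B₁ B₂) {r : ℝ} (hr : 0 ≤ r)
    (hrs : r ≤ s) (hst : s ≤ t) {η : Ω → E} (hη : StronglyMeasurable[F r] η)
    {K : ℝ} (hK : ∀ ω, ‖η ω‖ ≤ K) :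
    ∫ ω, ((B₁ t ω - B₁ r ω) * (B₂ t ω - B₂ r ω)) • η ω ∂μ =
      ∫ ω, ((B₁ s ω - B₁ r ω) * (B₂ s ω - B₂ r ω)) • η ω ∂μ +
        ∫ ω, ((B₁ t ω - B₁ s ω) * (B₂ t ω - B₂ s ω)) • η ω ∂μ := by
  have hs : 0 ≤ s := hr.trans hrs
  have hint {a b c d : ℝ} (ha : 0 ≤ a) (hab : a ≤ b) (hc : 0 ≤ c) (hcd : c ≤ d) :
      Integrable (fun ω => ((B₁ b ω - B₁ a ω) * (B₂ d ω - B₂ c ω)) • η ω) μ :=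
    (hB.integrable_sub_mul_sub ha hab hc hcd).smul_bdd K
      (hη.mono (hB.1.le r)).aestronglyMeasurable (ae_of_all _ hK)
  have hpast {W : ℝ → Ω → ℝ} (hW : IsBM μ F W) :
      StronglyMeasurable[F s] fun ω => (W s ω - W r ω) • η ω :=
    (hW.stronglyMeasurable_sub hr hrs le_rfl).smul (hη.mono (hW.mono hrs))
  have hmixed₁ : ∫ ω, ((B₁ t ω - B₁ s ω) * (B₂ s ω - B₂ r ω)) • η ω ∂μ = 0 := by
    simp only [mul_smul]
    exact hB.1.integral_sub_smul_eq_zero hs hst (hpast hB.2.1)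
  have hmixed₂ : ∫ ω, ((B₁ s ω - B₁ r ω) * (B₂ t ω - B₂ s ω)) • η ω ∂μ = 0 := by
    simp only [mul_comm (B₁ _ _ - _), mul_smul]
    exact hB.2.1.integral_sub_smul_eq_zero hs hst (hpast hB.1)
  calc ∫ ω, ((B₁ t ω - B₁ r ω) * (B₂ t ω - B₂ r ω)) • η ω ∂μ
      = ∫ ω, ((((B₁ s ω - B₁ r ω) * (B₂ s ω - B₂ r ω)) • η ω
            + ((B₁ t ω - B₁ s ω) * (B₂ t ω - B₂ s ω)) • η ω)
          + (((B₁ t ω - B₁ s ω) * (B₂ s ω - B₂ r ω)) • η ω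
            + ((B₁ s ω - B₁ r ω) * (B₂ t ω - B₂ s ω)) • η ω)) ∂μ := by
        congr with ω
        module
    _ = _ := by
        rw [integral_add ((hint hr hrs hr hrs).fun_add (hint hs hst hs hst))
            ((hint hs hst hr hrs).fun_add (hint hr hrs hs hst)),
          integral_add (hint hr hrs hr hrs) (hint hs hst hs hst),
          integral_add (hint hs hst hr hrs) (hint hr hrs hs hst), hmixed₁, hmixed₂, add_zero,
          add_zero]

lemma IsPlanarBM.integral_sub_mul_sub_smul_eq_crossSum (hB : IsPlanarBM μ F B₁ B₂) {u : ℕ → ℝ}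
    (hu : Monotone u) (hu0 : 0 ≤ u 0) {η : Ω → E} (hη : StronglyMeasurable[F (u 0)] η)
    {K : ℝ} (hK : ∀ ω, ‖η ω‖ ≤ K) (n : ℕ) :
    ∫ ω, ((B₁ (u n) ω - B₁ (u 0) ω) * (B₂ (u n) ω - B₂ (u 0) ω)) • η ω ∂μ =
      ∫ ω, crossSum B₁ B₂ u n ω • η ω ∂μ := by
  have hint (k : ℕ) : Integrable (fun ω => ((B₁ (u (k + 1)) ω - B₁ (u k) ω) *
      (B₂ (u (k + 1)) ω - B₂ (u k) ω)) • η ω) μ :=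
    (hB.integrable_sub_mul_sub (hu0.trans (hu k.zero_le)) (hu k.le_succ)
      (hu0.trans (hu k.zero_le)) (hu k.le_succ)).smul_bdd K
      (hη.mono (hB.1.le _)).aestronglyMeasurable (ae_of_all _ hK)
  simp only [crossSum, Finset.sum_smul]
  rw [integral_finsetSum _ fun k _ => hint k]
  induction n with
  | zero => simp
  | succ n ih =>
    rw [hB.integral_sub_mul_sub_smul_add hu0 (hu n.zero_le) (hu n.le_succ) hη hK, ih,
      Finset.sum_range_succ]

lemma norm_integral_smul_sq_le [IsProbabilityMeasure μ] {X : Ω → ℝ} (hX : MemLp X 2 μ)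
    {η : Ω → E} {K : ℝ} (hK : ∀ ω, ‖η ω‖ ≤ K) :
    ‖∫ ω, X ω • η ω ∂μ‖ ^ 2 ≤ (∫ ω, X ω ^ 2 ∂μ) * K ^ 2 := by
  have hnorm : ‖∫ ω, X ω • η ω ∂μ‖ ≤ (∫ ω, |X ω| ∂μ) * K := by
    rw [← integral_mul_const]
    refine norm_integral_le_of_norm_le ((hX.integrable one_le_two).abs.mul_const K)
      (ae_of_all _ fun ω => ?_)
    rw [norm_smul, Real.norm_eq_abs]
    gcongr
    exact hK ω
  have hvar : (∫ ω, |X ω| ∂μ) ^ 2 ≤ ∫ ω, X ω ^ 2 ∂μ := by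
    have := variance_nonneg |X| μ
    rw [variance_eq_sub hX.abs] at this
    simpa using this
  calc ‖∫ ω, X ω • η ω ∂μ‖ ^ 2 ≤ ((∫ ω, |X ω| ∂μ) * K) ^ 2 := by gcongr
    _ ≤ (∫ ω, X ω ^ 2 ∂μ) * K ^ 2 := by rw [mul_pow]; gcongr

-- `B₁` and `B₂` are independent of each other, but not assumed to be so given `F s`. Refining
-- `[s, t]` turns the product into a cross sum whose `L²` norm tends to zero with the mesh.
lemma IsPlanarBM.integral_sub_mul_sub_smul_eq_zero [IsProbabilityMeasure μ]
    (hB : IsPlanarBM μ F B₁ B₂) (hs : 0 ≤ s) (hst : s ≤ t)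
    {η : Ω → E} (hη : StronglyMeasurable[F s] η) {K : ℝ} (hK : ∀ ω, ‖η ω‖ ≤ K) :
    ∫ ω, ((B₁ t ω - B₁ s ω) * (B₂ t ω - B₂ s ω)) • η ω ∂μ = 0 := by
  have hbound (n : ℕ) : ‖∫ ω, ((B₁ t ω - B₁ s ω) * (B₂ t ω - B₂ s ω)) • η ω ∂μ‖ ^ 2
      ≤ (t - s) ^ 2 * K ^ 2 / (n + 1 : ℕ) := by
    set d : ℝ := (t - s) / (n + 1 : ℕ)
    have : 0 ≤ d := div_nonneg (sub_nonneg.2 hst) (by positivity)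
    set u : ℕ → ℝ := fun k => s + k * d
    have hu : Monotone u := fun j k hjk => by dsimp only [u]; gcongr
    have hu0 : u 0 = s := by simp [u]
    have hun : u (n + 1) = t := by simp only [u, d]; field_simp; ring
    have hstep (k : ℕ) : u (k + 1) - u k = d := by simp only [u]; push_cast; ring
    have hdiag := hB.integral_sub_mul_sub_smul_eq_crossSum hu (hu0 ▸ hs) (hu0 ▸ hη) hK (n + 1)
    rw [hun, hu0] at hdiag
    rw [hdiag]
    refine (norm_integral_smul_sq_le (hB.memLp_crossSum hu (hu0 ▸ hs) _) hK).trans_eq ?_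
    rw [hB.integral_crossSum_sq hu (hu0 ▸ hs)]
    simp only [hstep, Finset.sum_const, Finset.card_range, nsmul_eq_mul, d]
    field_simp
  have hlim := (tendsto_const_div_atTop_nhds_zero_nat ((t - s) ^ 2 * K ^ 2)).comp
    (tendsto_add_atTop_nat 1)
  exact norm_eq_zero.1 (pow_eq_zero_iff two_ne_zero |>.1
    (le_antisymm (ge_of_tendsto' hlim hbound) (by positivity)))

/-! ### Characteristic functions of elementary stochastic integrals -/

/-- The increment over `[s, t]` of `∫ a dX + ∫ b dY` for integrands `a` and `b` that do not depend
on time. -/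
def elementaryIncr (X Y : ℝ → Ω → ℝ) (a b : Ω → ℝ) (s t : ℝ) (ω : Ω) : ℝ :=
  a ω * (X t ω - X s ω) + b ω * (Y t ω - Y s ω)

lemma norm_cexp_mul_I_sub_le (x : ℝ) :
    ‖Complex.exp (x * Complex.I) - (1 + x * Complex.I - x ^ 2 / 2)‖ ≤ 4 * |x| ^ 3 := by
  have hnorm : ‖(x * Complex.I : ℂ)‖ = |x| := by simp
  rcases le_or_gt |x| 1 with hx | hx
  · have hbound := Complex.exp_bound (x := x * Complex.I) (hnorm.trans_le hx) (n := 3) (by norm_num)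
    have hpoly : ∑ k ∈ Finset.range 3, (x * Complex.I : ℂ) ^ k / k.factorial
        = 1 + x * Complex.I - x ^ 2 / 2 := by
      simp only [Finset.sum_range_succ, Finset.sum_range_zero, mul_pow, Complex.I_sq, pow_zero,
        pow_one, Nat.factorial]
      push_cast
      ring
    rw [hpoly, hnorm] at hbound
    refine hbound.trans ?_
    rw [mul_comm]
    gcongr
    norm_num [Nat.factorial]
  · have hpoly : ‖(1 + x * Complex.I - x ^ 2 / 2 : ℂ)‖ ≤ 1 + |x| + |x| ^ 2 / 2 := by
      refine (norm_sub_le _ _).trans (add_le_add ((norm_add_le _ _).trans ?_) ?_) <;> simp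
    calc ‖Complex.exp (x * Complex.I) - (1 + x * Complex.I - x ^ 2 / 2)‖
        ≤ 1 + (1 + |x| + |x| ^ 2 / 2) :=
          (norm_sub_le _ _).trans (add_le_add (Complex.norm_exp_ofReal_mul_I x).le hpoly)
      _ ≤ 4 * |x| ^ 3 := by
          nlinarith [one_lt_pow₀ hx two_ne_zero, one_lt_pow₀ hx three_ne_zero,
            pow_le_pow_right₀ hx.le (show 1 ≤ 3 by norm_num),
            pow_le_pow_right₀ hx.le (show 2 ≤ 3 by norm_num)]

lemma abs_mul_add_mul_pow_three_le {a b x y K : ℝ} (ha : |a| ≤ K) (hb : |b| ≤ K) :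
    |a * x + b * y| ^ 3 ≤ 4 * K ^ 3 * (|x| ^ 3 + |y| ^ 3) := by
  have hK : 0 ≤ K := (abs_nonneg _).trans ha
  calc |a * x + b * y| ^ 3 ≤ (K * |x| + K * |y|) ^ 3 := by
        gcongr
        refine (abs_add_le _ _).trans ?_
        rw [abs_mul, abs_mul]
        gcongr
    _ ≤ 2 ^ (3 - 1) * ((K * |x|) ^ 3 + (K * |y|) ^ 3) :=
        add_pow_le (by positivity) (by positivity) 3
    _ = 4 * K ^ 3 * (|x| ^ 3 + |y| ^ 3) := by ring

lemma norm_smul_le_mul_of_le {c K L : ℝ} {x : E} (hc : |c| ≤ K) (hx : ‖x‖ ≤ L) :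
    ‖c • x‖ ≤ K * L := by
  rw [norm_smul]
  exact mul_le_mul hc hx (norm_nonneg _) ((abs_nonneg _).trans hc)

section OneStep

variable {a b : Ω → ℝ} {K L κ r : ℝ}

lemma IsPlanarBM.measurable_elementaryIncr (hB : IsPlanarBM μ F B₁ B₂) (hs : 0 ≤ s)
    (hst : s ≤ t) (htr : t ≤ r) (ha : Measurable[F s] a) (hb : Measurable[F s] b) :
    Measurable[F r] (elementaryIncr B₁ B₂ a b s t) := by
  have hsr : F s ≤ F r := hB.1.mono (hst.trans htr)
  exact ((ha.mono hsr le_rfl).mul (hB.1.stronglyMeasurable_sub hs hst htr).measurable).add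
    ((hb.mono hsr le_rfl).mul (hB.2.1.stronglyMeasurable_sub hs hst htr).measurable)

lemma IsPlanarBM.memLp_elementaryIncr (hB : IsPlanarBM μ F B₁ B₂) (hs : 0 ≤ s) (hst : s ≤ t)
    (ha : Measurable[F s] a) (hb : Measurable[F s] b)
    (haK : ∀ ω, |a ω| ≤ K) (hbK : ∀ ω, |b ω| ≤ K) {p : ENNReal} (hp : p ≠ ⊤) :
    MemLp (elementaryIncr B₁ B₂ a b s t) p μ := by
  have hterm {W : ℝ → Ω → ℝ} (hW : IsBM μ F W) {c : Ω → ℝ} (hc : Measurable[F s] c)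
      (hcK : ∀ ω, |c ω| ≤ K) : MemLp (fun ω => c ω * (W t ω - W s ω)) p μ :=
    have hcm : AEStronglyMeasurable c μ := (hc.mono (hW.le s) le_rfl).aestronglyMeasurable
    have hincr := hW.memLp_sub hs hst hp
    hincr.of_le_mul (c := K) (hcm.mul hincr.1) <| ae_of_all _ fun ω =>
      norm_mul_le_of_le (hcK ω) le_rfl
  exact (hterm hB.1 ha haK).add (hterm hB.2.1 hb hbK)

lemma IsPlanarBM.integral_elementaryIncr_smul (hB : IsPlanarBM μ F B₁ B₂) (hs : 0 ≤ s)
    (hst : s ≤ t) (ha : Measurable[F s] a) (hb : Measurable[F s] b)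
    (haK : ∀ ω, |a ω| ≤ K) (hbK : ∀ ω, |b ω| ≤ K)
    {η : Ω → E} (hη : StronglyMeasurable[F s] η) (hηL : ∀ ω, ‖η ω‖ ≤ L) :
    ∫ ω, elementaryIncr B₁ B₂ a b s t ω • η ω ∂μ = 0 := by
  have hterm {W : ℝ → Ω → ℝ} (hW : IsBM μ F W) {c : Ω → ℝ} (hc : Measurable[F s] c)
      (hcK : ∀ ω, |c ω| ≤ K) : Integrable (fun ω => (W t ω - W s ω) • c ω • η ω) μ ∧
        ∫ ω, (W t ω - W s ω) • c ω • η ω ∂μ = 0 := by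
    have hcη : StronglyMeasurable[F s] fun ω => c ω • η ω := hc.stronglyMeasurable.smul hη
    exact ⟨(memLp_one_iff_integrable.1 (hW.memLp_sub hs hst ENNReal.one_ne_top)).smul_bdd (K * L)
      (hcη.mono (hW.le s)).aestronglyMeasurable
      (ae_of_all _ fun ω => norm_smul_le_mul_of_le (hcK ω) (hηL ω)),
      hW.integral_sub_smul_eq_zero hs hst hcη⟩
  obtain ⟨hint₁, hzero₁⟩ := hterm hB.1 ha haK
  obtain ⟨hint₂, hzero₂⟩ := hterm hB.2.1 hb hbK
  simp only [elementaryIncr, add_smul, mul_smul, smul_comm (a _), smul_comm (b _)]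
  rw [integral_add hint₁ hint₂, hzero₁, hzero₂, add_zero]

lemma IsPlanarBM.integral_elementaryIncr_sq_smul [IsProbabilityMeasure μ]
    (hB : IsPlanarBM μ F B₁ B₂) (hs : 0 ≤ s) (hst : s ≤ t)
    (ha : Measurable[F s] a) (hb : Measurable[F s] b)
    (haK : ∀ ω, |a ω| ≤ K) (hbK : ∀ ω, |b ω| ≤ K)
    {η : Ω → E} (hη : StronglyMeasurable[F s] η) (hηL : ∀ ω, ‖η ω‖ ≤ L) :
    ∫ ω, elementaryIncr B₁ B₂ a b s t ω ^ 2 • η ω ∂μ =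
      (t - s) • ∫ ω, (a ω ^ 2 + b ω ^ 2) • η ω ∂μ := by
  have hbdd {c d : Ω → ℝ} (hcK : ∀ ω, |c ω| ≤ K) (hdK : ∀ ω, |d ω| ≤ K) (ω : Ω) :
      ‖c ω • d ω • η ω‖ ≤ K * (K * L) :=
    norm_smul_le_mul_of_le (hcK ω) (norm_smul_le_mul_of_le (hdK ω) (hηL ω))
  have hmeas {c d : Ω → ℝ} (hc : Measurable[F s] c) (hd : Measurable[F s] d) :
      StronglyMeasurable[F s] fun ω => c ω • d ω • η ω :=
    hc.stronglyMeasurable.smul (hd.stronglyMeasurable.smul hη)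
  have hint {X : Ω → ℝ} (hX : Integrable X μ) {c d : Ω → ℝ} (hc : Measurable[F s] c)
      (hd : Measurable[F s] d) (hcK : ∀ ω, |c ω| ≤ K) (hdK : ∀ ω, |d ω| ≤ K) :
      Integrable (fun ω => X ω • c ω • d ω • η ω) μ :=
    hX.smul_bdd _ ((hmeas hc hd).mono (hB.1.le s)).aestronglyMeasurable
      (ae_of_all _ (hbdd hcK hdK))
  have hint₁ := hint (hB.1.integrable_sub_sq hs hst) ha ha haK haK
  have hint₂ := hint (hB.2.1.integrable_sub_sq hs hst) hb hb hbK hbK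
  have hint₁₂ := hint (hB.integrable_sub_mul_sub hs hst hs hst) ha hb haK hbK
  have hone : Integrable (fun _ : Ω => (1 : ℝ)) μ := integrable_const 1
  calc ∫ ω, elementaryIncr B₁ B₂ a b s t ω ^ 2 • η ω ∂μ
      = ∫ ω, ((B₁ t ω - B₁ s ω) ^ 2 • a ω • a ω • η ω
          + (B₂ t ω - B₂ s ω) ^ 2 • b ω • b ω • η ω
          + (2 : ℝ) • ((B₁ t ω - B₁ s ω) * (B₂ t ω - B₂ s ω)) • a ω • b ω • η ω) ∂μ := by
        congr with ω
        simp only [elementaryIncr]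
        module
    _ = (t - s) • (∫ ω, (1 : ℝ) • a ω • a ω • η ω ∂μ)
          + (t - s) • ∫ ω, (1 : ℝ) • b ω • b ω • η ω ∂μ := by
        rw [integral_add (hint₁.fun_add hint₂) (hint₁₂.fun_smul 2), integral_add hint₁ hint₂,
          integral_smul, hB.1.integral_sub_sq_smul hs hst (hmeas ha ha),
          hB.2.1.integral_sub_sq_smul hs hst (hmeas hb hb),
          hB.integral_sub_mul_sub_smul_eq_zero hs hst (hmeas ha hb) (hbdd haK hbK)]
        simp only [smul_zero, add_zero, one_smul]
    _ = (t - s) • ∫ ω, (a ω ^ 2 + b ω ^ 2) • η ω ∂μ := by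
        rw [← smul_add, ← integral_add (hint hone ha ha haK haK) (hint hone hb hb hbK hbK)]
        simp only [one_smul, sq, add_smul, mul_smul]

lemma IsPlanarBM.integral_taylor_elementaryIncr_mul [IsProbabilityMeasure μ]
    (hB : IsPlanarBM μ F B₁ B₂) (hs : 0 ≤ s) (hst : s ≤ t)
    (ha : Measurable[F s] a) (hb : Measurable[F s] b) (hab : ∀ ω, a ω ^ 2 + b ω ^ 2 = κ)
    {ξ : Ω → ℂ} (hξ : Measurable[F s] ξ) (hξL : ∀ ω, ‖ξ ω‖ ≤ L) :
    ∫ ω, ξ ω * (1 + elementaryIncr B₁ B₂ a b s t ω * Complex.I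
        - (elementaryIncr B₁ B₂ a b s t ω : ℂ) ^ 2 / 2) ∂μ =
      (1 - κ * (t - s) / 2 : ℝ) * ∫ ω, ξ ω ∂μ := by
  have haK (ω : Ω) : |a ω| ≤ √κ := Real.abs_le_sqrt (by nlinarith [hab ω])
  have hbK (ω : Ω) : |b ω| ≤ √κ := Real.abs_le_sqrt (by nlinarith [hab ω])
  have hincr := hB.memLp_elementaryIncr hs hst ha hb haK hbK (p := 2) ENNReal.ofNat_ne_top
  have hξF : StronglyMeasurable[F s] ξ := hξ.stronglyMeasurable
  have hξm := (hξF.mono (hB.1.le s)).aestronglyMeasurable (μ := μ)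
  have hint₀ : Integrable ξ μ := Integrable.of_bound hξm L (ae_of_all _ hξL)
  have hint₁ : Integrable (fun ω => elementaryIncr B₁ B₂ a b s t ω • ξ ω) μ :=
    (hincr.integrable one_le_two).smul_bdd L hξm (ae_of_all _ hξL)
  have hint₂ : Integrable (fun ω => elementaryIncr B₁ B₂ a b s t ω ^ 2 • ξ ω) μ :=
    hincr.integrable_sq.smul_bdd L hξm (ae_of_all _ hξL)
  calc ∫ ω, ξ ω * (1 + elementaryIncr B₁ B₂ a b s t ω * Complex.I
        - (elementaryIncr B₁ B₂ a b s t ω : ℂ) ^ 2 / 2) ∂μ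
      = ∫ ω, (ξ ω + Complex.I * elementaryIncr B₁ B₂ a b s t ω • ξ ω
          - 2⁻¹ * elementaryIncr B₁ B₂ a b s t ω ^ 2 • ξ ω) ∂μ := by
        congr with ω
        simp only [Complex.real_smul]
        push_cast
        ring
    _ = (∫ ω, ξ ω ∂μ) - 2⁻¹ * ((t - s) • κ • ∫ ω, ξ ω ∂μ) := by
        rw [integral_sub (hint₀.fun_add (hint₁.const_mul _)) (hint₂.const_mul _),
          integral_add hint₀ (hint₁.const_mul _), integral_const_mul, integral_const_mul,
          hB.integral_elementaryIncr_smul hs hst ha hb haK hbK hξF hξL,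
          hB.integral_elementaryIncr_sq_smul hs hst ha hb haK hbK hξF hξL]
        simp only [hab, integral_smul, mul_zero, add_zero]
    _ = (1 - κ * (t - s) / 2 : ℝ) * ∫ ω, ξ ω ∂μ := by
        simp only [Complex.real_smul]
        push_cast
        ring

lemma IsPlanarBM.norm_integral_mul_cexp_elementaryIncr_sub_le [IsProbabilityMeasure μ]
    (hB : IsPlanarBM μ F B₁ B₂) (hs : 0 ≤ s) (hst : s ≤ t)
    (ha : Measurable[F s] a) (hb : Measurable[F s] b) (hab : ∀ ω, a ω ^ 2 + b ω ^ 2 = κ)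
    {ξ : Ω → ℂ} (hξ : Measurable[F s] ξ) (hξ1 : ∀ ω, ‖ξ ω‖ ≤ 1) :
    ‖(∫ ω, ξ ω * Complex.exp (elementaryIncr B₁ B₂ a b s t ω * Complex.I) ∂μ)
        - (1 - κ * (t - s) / 2 : ℝ) * ∫ ω, ξ ω ∂μ‖ ≤
      32 * √κ ^ 3 * gaussianAbsMomentThree * √(t - s) ^ 3 := by
  have haK (ω : Ω) : |a ω| ≤ √κ := Real.abs_le_sqrt (by nlinarith [hab ω])
  have hbK (ω : Ω) : |b ω| ≤ √κ := Real.abs_le_sqrt (by nlinarith [hab ω])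
  set X := elementaryIncr B₁ B₂ a b s t
  have hX : Measurable X :=
    (hB.measurable_elementaryIncr hs hst le_rfl ha hb).mono (hB.1.le t) le_rfl
  have hξm : Measurable ξ := hξ.mono (hB.1.le s) le_rfl
  have hexp : Integrable (fun ω => ξ ω * Complex.exp (X ω * Complex.I)) μ := by
    refine Integrable.of_bound (by fun_prop) 1 (ae_of_all _ fun ω => ?_)
    rw [norm_mul, Complex.norm_exp_ofReal_mul_I, mul_one]
    exact hξ1 ω
  have hcube := (hB.1.integrable_abs_sub_pow_three hs hst).add
    (hB.2.1.integrable_abs_sub_pow_three hs hst)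
  have hremainder (ω : Ω) : ‖ξ ω * Complex.exp (X ω * Complex.I)
      - ξ ω * (1 + X ω * Complex.I - (X ω : ℂ) ^ 2 / 2)‖ ≤
        16 * √κ ^ 3 * (|B₁ t ω - B₁ s ω| ^ 3 + |B₂ t ω - B₂ s ω| ^ 3) := by
    rw [← mul_sub, norm_mul]
    calc _ ≤ 1 * (4 * |X ω| ^ 3) := by
          gcongr
          exacts [hξ1 ω, norm_cexp_mul_I_sub_le _]
      _ ≤ 1 * (4 * (4 * √κ ^ 3 * (|B₁ t ω - B₁ s ω| ^ 3 + |B₂ t ω - B₂ s ω| ^ 3))) := by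
          gcongr
          exact abs_mul_add_mul_pow_three_le (haK ω) (hbK ω)
      _ = _ := by ring
  have htaylor : Integrable (fun ω => ξ ω * (1 + X ω * Complex.I - (X ω : ℂ) ^ 2 / 2)) μ := by
    simpa only [sub_sub_cancel] using hexp.sub'
      ((hcube.const_mul _).mono' (by fun_prop) (ae_of_all _ hremainder))
  rw [← hB.integral_taylor_elementaryIncr_mul hs hst ha hb hab hξ hξ1, ← integral_sub hexp htaylor]
  refine (norm_integral_le_of_norm_le (hcube.const_mul _) (ae_of_all _ hremainder)).trans_eq ?_
  rw [integral_const_mul, integral_add' (hB.1.integrable_abs_sub_pow_three hs hst)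
    (hB.2.1.integrable_abs_sub_pow_three hs hst), hB.1.integral_abs_sub_pow_three hs hst,
    hB.2.1.integral_abs_sub_pow_three hs hst]
  ring

end OneStep

lemma IsPlanarBM.measurable_sum_elementaryIncr (hB : IsPlanarBM μ F B₁ B₂) {u : ℕ → ℝ}
    (hu : Monotone u) (hu0 : 0 ≤ u 0) {a b : ℕ → Ω → ℝ} (ha : ∀ k, Measurable[F (u k)] (a k))
    (hb : ∀ k, Measurable[F (u k)] (b k)) (n : ℕ) :
    Measurable[F (u n)] fun ω =>
      ∑ k ∈ Finset.range n, elementaryIncr B₁ B₂ (a k) (b k) (u k) (u (k + 1)) ω :=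
  Finset.measurable_fun_sum _ fun k hk =>
    hB.measurable_elementaryIncr (hu0.trans (hu k.zero_le)) (hu k.le_succ)
      (hu (Finset.mem_range.1 hk)) (ha k) (hb k)

lemma IsPlanarBM.norm_integral_cexp_add_sum_elementaryIncr_le [IsProbabilityMeasure μ]
    (hB : IsPlanarBM μ F B₁ B₂) {u : ℕ → ℝ} (hu0 : 0 ≤ u 0) {d : ℝ} (hd : 0 ≤ d)
    (hud : ∀ k, u (k + 1) - u k = d) {a b : ℕ → Ω → ℝ} (ha : ∀ k, Measurable[F (u k)] (a k))
    (hb : ∀ k, Measurable[F (u k)] (b k)) {κ : ℝ} (hab : ∀ k ω, a k ω ^ 2 + b k ω ^ 2 = κ)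
    (hκd : 0 ≤ 1 - κ * d / 2) {V : Ω → ℝ} (hV : Measurable[F (u 0)] V) (n : ℕ) :
    ‖∫ ω, Complex.exp ((V ω + ∑ k ∈ Finset.range n,
        elementaryIncr B₁ B₂ (a k) (b k) (u k) (u (k + 1)) ω : ℝ) * Complex.I) ∂μ‖ ≤
      (1 - κ * d / 2) ^ n + n * (32 * √κ ^ 3 * gaussianAbsMomentThree * √d ^ 3) := by
  set q := 1 - κ * d / 2 with hq
  set ε := 32 * √κ ^ 3 * gaussianAbsMomentThree * √d ^ 3
  have hε : 0 ≤ ε := by have := gaussianAbsMomentThree_nonneg; positivity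
  have hq1 : q ≤ 1 := by
    obtain ⟨ω⟩ := nonempty_of_isProbabilityMeasure μ
    have hκ : 0 ≤ κ := hab 0 ω ▸ by positivity
    rw [hq, sub_le_self_iff]
    positivity
  have hu : Monotone u := monotone_nat_of_le_succ fun k => by linarith [hud k]
  induction n with
  | zero =>
    have h := norm_integral_le_of_norm_le_const (μ := μ)
      (ae_of_all μ fun ω => (Complex.norm_exp_ofReal_mul_I (V ω)).le)
    simpa using h
  | succ n ih =>
    set S : Ω → ℝ := fun ω => V ω + ∑ k ∈ Finset.range n,
      elementaryIncr B₁ B₂ (a k) (b k) (u k) (u (k + 1)) ω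
    have hS : Measurable[F (u n)] S := (hV.mono (hB.1.mono (hu n.zero_le)) le_rfl).add
      (hB.measurable_sum_elementaryIncr hu hu0 ha hb n)
    have hcexp : Measurable fun x : ℝ => Complex.exp (x * Complex.I) := by fun_prop
    have hstep := hB.norm_integral_mul_cexp_elementaryIncr_sub_le (hu0.trans (hu n.zero_le))
      (hu n.le_succ) (ha n) (hb n) (hab n) (hcexp.comp hS)
      (fun ω => (Complex.norm_exp_ofReal_mul_I _).le)
    rw [hud] at hstep
    simp only [Function.comp_apply, ← Complex.exp_add, ← add_mul, ← Complex.ofReal_add] at hstep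
    simp only [Finset.sum_range_succ, ← add_assoc]
    calc _ ≤ q * ‖∫ ω, Complex.exp (S ω * Complex.I) ∂μ‖ + ε := by
          refine (norm_le_norm_add_norm_sub' _ _).trans (add_le_add (le_of_eq ?_) hstep)
          rw [norm_mul, Complex.norm_real, Real.norm_of_nonneg hκd]
      _ ≤ q * (q ^ n + n * ε) + ε := by gcongr
      _ ≤ q ^ (n + 1) + (n + 1 : ℕ) * ε := by
          have : q * (n * ε) ≤ n * ε := mul_le_of_le_one_left (by positivity) hq1
          push_cast
          linarith [pow_succ' q n]

/-! ### Dyadic Riemann sums and stochastic integrals -/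

/-- The `i`-th point of the subdivision of `[0, T]` into `2 ^ n` intervals of equal length. -/
def dyadicPoint (T : ℝ) (n i : ℕ) : ℝ := T * i / 2 ^ n

lemma dyadicPoint_two_pow (T : ℝ) (n : ℕ) : dyadicPoint T n (2 ^ n) = T := by simp [dyadicPoint]

lemma dyadicPoint_succ_sub (T : ℝ) (n i : ℕ) :
    dyadicPoint T n (i + 1) - dyadicPoint T n i = T / 2 ^ n := by
  simp only [dyadicPoint]
  push_cast
  ring

lemma dyadicPoint_mono {T : ℝ} (hT : 0 ≤ T) (n : ℕ) : Monotone (dyadicPoint T n) :=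
  fun i j hij => by unfold dyadicPoint; gcongr

lemma dyadicPoint_nonneg {T : ℝ} (hT : 0 ≤ T) (n i : ℕ) : 0 ≤ dyadicPoint T n i := by
  unfold dyadicPoint; positivity

lemma dyadicPoint_two_pow_sub (T : ℝ) (k p : ℕ) :
    dyadicPoint T (k + p) (2 ^ (k + p) - 2 ^ p) = T - T / 2 ^ k := by
  have hle : 2 ^ p ≤ 2 ^ (k + p) := Nat.pow_le_pow_right two_pos (Nat.le_add_left p k)
  simp only [dyadicPoint]
  rw [Nat.cast_sub hle]
  push_cast [pow_add]
  field_simp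

lemma rsum_add_rsum {Ω : Type*} (H₁ H₂ X Y : ℝ → Ω → ℝ) (T : ℝ) (n : ℕ) (ω : Ω) :
    rsum H₁ X T n ω + rsum H₂ Y T n ω = ∑ i ∈ Finset.range (2 ^ n),
      elementaryIncr X Y (H₁ (dyadicPoint T n i)) (H₂ (dyadicPoint T n i))
        (dyadicPoint T n i) (dyadicPoint T n (i + 1)) ω := by
  simp only [rsum, elementaryIncr, dyadicPoint, Nat.cast_add_one, Finset.sum_add_distrib]

section Dyadic

variable {H₁ H₂ : ℝ → Ω → ℝ} {I : ℝ → Ω → ℝ} {T κ : ℝ}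

lemma IsPlanarBM.measurable_rsum_add_rsum (hB : IsPlanarBM μ F B₁ B₂)
    (hH₁ : ∀ t, 0 ≤ t → Measurable[F t] (H₁ t)) (hH₂ : ∀ t, 0 ≤ t → Measurable[F t] (H₂ t))
    (hT : 0 ≤ T) (n : ℕ) :
    Measurable[F T] fun ω => rsum H₁ B₁ T n ω + rsum H₂ B₂ T n ω := by
  have h := hB.measurable_sum_elementaryIncr (dyadicPoint_mono hT n)
    (dyadicPoint_nonneg hT n 0) (fun i => hH₁ _ (dyadicPoint_nonneg hT n i))
    (fun i => hH₂ _ (dyadicPoint_nonneg hT n i)) (2 ^ n)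
  rw [dyadicPoint_two_pow] at h
  simpa only [rsum_add_rsum] using h

lemma IsPlanarBM.norm_integral_cexp_add_rsum_le [IsProbabilityMeasure μ]
    (hB : IsPlanarBM μ F B₁ B₂)
    (hH₁ : ∀ t, 0 ≤ t → Measurable[F t] (H₁ t)) (hH₂ : ∀ t, 0 ≤ t → Measurable[F t] (H₂ t))
    (hH : ∀ t ω, H₁ t ω ^ 2 + H₂ t ω ^ 2 = κ) (hT : 0 ≤ T) (k p : ℕ)
    (hκ : 0 ≤ 1 - κ * (T / 2 ^ (k + p)) / 2)
    {V : Ω → ℝ} (hV : Measurable[F (T - T / 2 ^ k)] V) :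
    ‖∫ ω, Complex.exp ((V ω + (rsum H₁ B₁ T (k + p) ω + rsum H₂ B₂ T (k + p) ω) : ℝ)
        * Complex.I) ∂μ‖ ≤
      Real.exp (-(κ * (T / 2 ^ k) / 2)) +
        T / 2 ^ k * (32 * √κ ^ 3 * gaussianAbsMomentThree) * √(T / 2 ^ (k + p)) := by
  set d := T / 2 ^ (k + p)
  have hd : 0 ≤ d := by positivity
  have hdk : (2 ^ p : ℕ) * d = T / 2 ^ k := by
    simp only [d, pow_add]
    push_cast
    field_simp
  set j := 2 ^ (k + p) - 2 ^ p
  have hjp : j + 2 ^ p = 2 ^ (k + p) :=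
    Nat.sub_add_cancel (Nat.pow_le_pow_right two_pos (Nat.le_add_left p k))
  set u : ℕ → ℝ := dyadicPoint T (k + p)
  have huj : u j = T - T / 2 ^ k := dyadicPoint_two_pow_sub T k p
  have hu0 (i : ℕ) : 0 ≤ u i := dyadicPoint_nonneg hT _ i
  have hhead := hB.measurable_sum_elementaryIncr (dyadicPoint_mono hT (k + p)) (hu0 0)
    (fun i => hH₁ _ (hu0 i)) (fun i => hH₂ _ (hu0 i)) j
  have hiter := hB.norm_integral_cexp_add_sum_elementaryIncr_le (u := fun i => u (j + i)) (hu0 j)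
    hd (fun i => dyadicPoint_succ_sub T _ (j + i)) (fun i => hH₁ _ (hu0 (j + i)))
    (fun i => hH₂ _ (hu0 (j + i))) (fun i ω => hH _ ω) hκ ((huj ▸ hV).add hhead) (2 ^ p)
  simp only [rsum_add_rsum, ← hjp, Finset.sum_range_add, ← add_assoc] at hiter ⊢
  refine hiter.trans (add_le_add ?_ (le_of_eq ?_))
  · calc (1 - κ * d / 2) ^ (2 ^ p) ≤ Real.exp (-(κ * d / 2)) ^ (2 ^ p) := by
          gcongr
          exact Real.one_sub_le_exp_neg _
      _ = Real.exp (-(κ * (T / 2 ^ k) / 2)) := by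
          rw [← Real.exp_nat_mul, ← hdk]
          ring_nf
  · rw [← hdk, pow_succ √d, Real.sq_sqrt hd]
    ring

lemma mul_rsum {Ω : Type*} (c : ℝ) (H X : ℝ → Ω → ℝ) (t : ℝ) (n : ℕ) (ω : Ω) :
    c * rsum H X t n ω = rsum (fun s ω => c * H s ω) X t n ω := by
  simp only [rsum, Finset.mul_sum, mul_assoc]

lemma rsum_neg {Ω : Type*} (H X : ℝ → Ω → ℝ) (t : ℝ) (n : ℕ) (ω : Ω) :
    rsum (fun s ω => -H s ω) X t n ω = -rsum H X t n ω := by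
  simp only [rsum, neg_mul, Finset.sum_neg_distrib]

lemma IsPlanarBM.norm_charFun_map_add_rsum_le [IsProbabilityMeasure μ]
    (hB : IsPlanarBM μ F B₁ B₂)
    (hH₁ : ∀ t, 0 ≤ t → Measurable[F t] (H₁ t)) (hH₂ : ∀ t, 0 ≤ t → Measurable[F t] (H₂ t))
    (hH : ∀ t ω, H₁ t ω ^ 2 + H₂ t ω ^ 2 = κ) (hT : 0 ≤ T) (k p : ℕ) (θ : ℝ)
    (hκ : 0 ≤ 1 - κ * θ ^ 2 * (T / 2 ^ (k + p)) / 2)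
    {V : Ω → ℝ} (hV : Measurable[F (T - T / 2 ^ k)] V) :
    ‖charFun (μ.map fun ω => V ω + (rsum H₁ B₁ T (k + p) ω + rsum H₂ B₂ T (k + p) ω)) θ‖ ≤
      Real.exp (-(κ * (T / 2 ^ k) * θ ^ 2 / 2)) +
        T / 2 ^ k * (32 * √(κ * θ ^ 2) ^ 3 * gaussianAbsMomentThree) * √(T / 2 ^ (k + p)) := by
  have hmeas : Measurable fun ω => V ω + (rsum H₁ B₁ T (k + p) ω + rsum H₂ B₂ T (k + p) ω) :=
    (hV.mono (hB.1.le _) le_rfl).add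
      ((hB.measurable_rsum_add_rsum hH₁ hH₂ hT _).mono (hB.1.le _) le_rfl)
  rw [charFun_apply_real, integral_map hmeas.aemeasurable (by fun_prop)]
  simp only [← Complex.ofReal_mul, mul_add, mul_rsum]
  convert hB.norm_integral_cexp_add_rsum_le (fun t ht => (hH₁ t ht).const_mul θ)
    (fun t ht => (hH₂ t ht).const_mul θ) (κ := κ * θ ^ 2)
    (fun t ω => by rw [← hH t ω]; ring) hT k p hκ (hV.const_mul θ) using 4
  ring

lemma tendstoInMeasure_sub {α ι M : Type*} [MeasurableSpace α] {ν : Measure α}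
    [SeminormedAddCommGroup M] {l : Filter ι} {f f' : ι → α → M} {g g' : α → M}
    (hf : TendstoInMeasure ν f l g) (hf' : TendstoInMeasure ν f' l g') :
    TendstoInMeasure ν (fun i x => f i x - f' i x) l fun x => g x - g' x := by
  rw [tendstoInMeasure_iff_norm] at hf hf' ⊢
  intro ε hε
  have hsum := (hf _ (half_pos hε)).add (hf' _ (half_pos hε))
  rw [add_zero] at hsum
  refine tendsto_of_tendsto_of_tendsto_of_le_of_le tendsto_const_nhds hsum
    (fun _ => zero_le) fun i => (measure_mono fun x hx => ?_).trans (measure_union_le _ _)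
  by_contra! hlt
  simp only [mem_union, mem_ofPred_eq, not_or, not_le] at hx hlt
  rw [sub_sub_sub_comm] at hx
  linarith [norm_sub_le (f i x - g x) (f' i x - g' x)]

lemma tendstoInMeasure_const_add {α ι M : Type*} [MeasurableSpace α] {ν : Measure α}
    [SeminormedAddCommGroup M] {l : Filter ι} {f : ι → α → M} {g : α → M} (V : α → M)
    (hf : TendstoInMeasure ν f l g) :
    TendstoInMeasure ν (fun i x => V x + f i x) l fun x => V x + g x :=
  fun ε hε => by simpa only [edist_add_left] using hf ε hε

lemma IsSI.sub {I₁ I₂ : ℝ → Ω → ℝ} (h₁ : IsSI μ H₁ B₁ I₁) (h₂ : IsSI μ H₂ B₂ I₂) :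
    IsSI2 μ H₁ B₁ (fun t ω => -H₂ t ω) B₂ fun t ω => I₁ t ω - I₂ t ω := by
  refine ⟨?_, fun t ht => ?_⟩
  · filter_upwards [h₁.1, h₂.1] with ω h₁ω h₂ω
    rw [h₁ω, h₂ω, sub_zero]
  · simpa only [rsum_neg, ← sub_eq_add_neg] using tendstoInMeasure_sub (h₁.2 t ht) (h₂.2 t ht)

lemma tendsto_const_div_two_pow (c : ℝ) :
    Tendsto (fun n : ℕ => c / 2 ^ n) atTop (nhds 0) :=
  tendsto_const_nhds.div_atTop (tendsto_pow_atTop_atTop_of_one_lt one_lt_two)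

lemma IsPlanarBM.aemeasurable_of_isSI2 (hB : IsPlanarBM μ F B₁ B₂)
    (hH₁ : ∀ t, 0 ≤ t → Measurable[F t] (H₁ t)) (hH₂ : ∀ t, 0 ≤ t → Measurable[F t] (H₂ t))
    (hI : IsSI2 μ H₁ B₁ H₂ B₂ I) (ht : 0 ≤ t) : AEMeasurable (I t) μ :=
  (hI.2 t ht).aemeasurable fun n =>
    ((hB.measurable_rsum_add_rsum hH₁ hH₂ ht n).mono (hB.1.le t) le_rfl).aemeasurable

-- Given the past at time `T - T / 2 ^ k`, the increment of the integral is Gaussian with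
-- variance `κ * (T / 2 ^ k)`.
lemma IsPlanarBM.norm_charFun_map_add_sub_le_of_isSI2 [IsProbabilityMeasure μ]
    (hB : IsPlanarBM μ F B₁ B₂)
    (hH₁ : ∀ t, 0 ≤ t → Measurable[F t] (H₁ t)) (hH₂ : ∀ t, 0 ≤ t → Measurable[F t] (H₂ t))
    (hH : ∀ t ω, H₁ t ω ^ 2 + H₂ t ω ^ 2 = κ) (hI : IsSI2 μ H₁ B₁ H₂ B₂ I) (hT : 0 ≤ T) (k : ℕ)
    {V : Ω → ℝ} (hV : Measurable[F (T - T / 2 ^ k)] V) (θ : ℝ) :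
    ‖charFun (μ.map fun ω => V ω + (I T ω - I (T - T / 2 ^ k) ω)) θ‖ ≤
      Real.exp (-(κ * (T / 2 ^ k) * θ ^ 2 / 2)) := by
  set s := T - T / 2 ^ k
  have hs : 0 ≤ s := sub_nonneg.2 (div_le_self hT (one_le_pow₀ one_le_two))
  set R : ℝ → ℕ → Ω → ℝ := fun t n ω => rsum H₁ B₁ t n ω + rsum H₂ B₂ t n ω
  have hR {t : ℝ} (ht : 0 ≤ t) (n : ℕ) : Measurable[F t] (R t n) :=
    hB.measurable_rsum_add_rsum hH₁ hH₂ ht n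
  have hlim := tendstoInMeasure_const_add V (tendstoInMeasure_sub (hI.2 T hT) (hI.2 s hs))
  have hmeas (n : ℕ) : AEMeasurable (fun ω => V ω + (R T n ω - R s n ω)) μ :=
    ((hV.mono (hB.1.le _) le_rfl).add (((hR hT n).mono (hB.1.le _) le_rfl).sub
      ((hR hs n).mono (hB.1.le _) le_rfl))).aemeasurable
  have hshift : Tendsto (fun p : ℕ => k + p) atTop atTop :=
    tendsto_atTop_mono (Nat.le_add_left · k) tendsto_id
  have hcharFun := (ProbabilityMeasure.tendsto_iff_tendsto_charFun.1
    (hlim.tendstoInDistribution hmeas).tendsto θ).norm.comp hshift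
  have hmesh : Tendsto (fun p : ℕ => T / 2 ^ (k + p)) atTop (nhds 0) :=
    (tendsto_const_div_two_pow T).comp hshift
  have hbound := (hmesh.sqrt.const_mul
    (T / 2 ^ k * (32 * √(κ * θ ^ 2) ^ 3 * gaussianAbsMomentThree))).const_add
      (Real.exp (-(κ * (T / 2 ^ k) * θ ^ 2 / 2)))
  rw [Real.sqrt_zero, mul_zero, add_zero] at hbound
  have hsmall : ∀ᶠ p in atTop, 0 ≤ 1 - κ * θ ^ 2 * (T / 2 ^ (k + p)) / 2 := by
    have h := ((hmesh.const_mul (κ * θ ^ 2)).div_const 2).const_sub 1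
    rw [mul_zero, zero_div, sub_zero] at h
    exact h.eventually_const_le one_pos
  refine le_of_tendsto_of_tendsto hcharFun hbound ?_
  filter_upwards [hsmall] with p hp
  have h := hB.norm_charFun_map_add_rsum_le hH₁ hH₂ hH hT k p θ hp (hV.sub (hR hs (k + p)))
  simpa only [Function.comp_apply, ProbabilityMeasure.coe_mk, R, Pi.sub_apply, ← add_sub_assoc,
    sub_add_eq_add_sub] using h

end Dyadic

end Brownian

/-! ### Bounded drift and occupation times -/

lemma lipschitzWith_integral_of_nnnorm_le {E : Type*} [NormedAddCommGroup E] [NormedSpace ℝ E]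
    {f : ℝ → E} {C : NNReal} (hf : AEStronglyMeasurable f) (hC : ∀ t, ‖f t‖₊ ≤ C) (a : ℝ) :
    LipschitzWith C fun t => ∫ s in a..t, f s := by
  have hint (s t : ℝ) : IntervalIntegrable f volume s t :=
    (intervalIntegrable_const (c := (C : ℝ))).mono_fun hf.restrict <|
      ae_of_all _ fun t => NNReal.coe_le_coe.2 (hC t) |>.trans (le_abs_self _)
  refine .of_dist_le_mul fun t s => ?_
  rw [dist_eq_norm, intervalIntegral.integral_interval_sub_left (hint a t) (hint a s)]
  exact intervalIntegral.norm_integral_le_of_norm_le_const fun r _ => hC r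

lemma lipschitzWith_integral_ite {p : ℝ → Prop} [DecidablePred p] (hp : MeasurableSet {t | p t})
    (a b c : ℝ) :
    LipschitzWith (max ‖a‖₊ ‖b‖₊) fun t => ∫ s in c..t, if p s then a else b :=
  lipschitzWith_integral_of_nnnorm_le
    (Measurable.ite hp measurable_const measurable_const).aestronglyMeasurable
    (fun t => by split_ifs <;> simp) c

lemma lipschitzOnWith_sub_of_eq_integral_ite_add {y₁ y₂ i₁ i₂ : ℝ → ℝ} {a b x₁ x₂ : ℝ}
    (hy₁ : Continuous y₁) (hy₂ : Continuous y₂)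
    (heq : ∀ t, 0 ≤ t →
      y₁ t = x₁ + (∫ s in (0 : ℝ)..t, if y₁ s ≤ y₂ s then a else b) + i₁ t ∧
      y₂ t = x₂ + (∫ s in (0 : ℝ)..t, if y₁ s ≤ y₂ s then b else a) + i₂ t) :
    LipschitzOnWith (max ‖a‖₊ ‖b‖₊ + max ‖b‖₊ ‖a‖₊)
      (fun t => y₁ t - y₂ t - (i₁ t - i₂ t)) (Ici 0) := by
  have hle : MeasurableSet {t | y₁ t ≤ y₂ t} := (isClosed_le hy₁ hy₂).measurableSet
  have hdrift : EqOn (fun t => y₁ t - y₂ t - (i₁ t - i₂ t))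
      (fun t => x₁ - x₂ + ((∫ s in (0 : ℝ)..t, if y₁ s ≤ y₂ s then a else b) -
        ∫ s in (0 : ℝ)..t, if y₁ s ≤ y₂ s then b else a)) (Ici 0) := fun t ht => by
    dsimp only
    linarith [heq t ht]
  intro t ht s hs
  rw [hdrift ht, hdrift hs, edist_add_left]
  exact (lipschitzWith_integral_ite hle a b 0).sub (lipschitzWith_integral_ite hle b a 0) t s

section OccupationTime

variable {μ : Measure Ω} {E : Type*} [TopologicalSpace E] [TopologicalSpace.PseudoMetrizableSpace E]
  [MeasurableSpace E] [BorelSpace E] {D : ℝ → Ω → E}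

lemma exists_measurable_uncurry_ae_eq_of_continuous (hD : ∀ t, 0 ≤ t → Measurable (D t))
    (hcont : ∀ᵐ ω ∂μ, Continuous fun t => D t ω) :
    ∃ D' : ℝ → Ω → E, Measurable (Function.uncurry D') ∧
      ∀ᵐ ω ∂μ, ∀ t, 0 ≤ t → D' t ω = D t ω := by
  classical
  set N := toMeasurable μ {ω | ¬ Continuous fun t => D t ω}
  have hN : ∀ᵐ ω ∂μ, ω ∉ N :=
    measure_eq_zero_iff_ae_notMem.1 ((measure_toMeasurable _).trans (ae_iff.1 hcont))
  refine ⟨fun t ω => if ω ∈ N then D 0 ω else D (max t 0) ω,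
    measurable_uncurry_of_continuous_of_measurable (fun ω => ?_) fun t =>
      .ite (measurableSet_toMeasurable _ _) (hD 0 le_rfl) (hD _ (le_max_right t 0)), ?_⟩
  · by_cases hω : ω ∈ N
    · simpa only [hω, if_true] using continuous_const
    · have hωcont : Continuous fun t => D t ω :=
        not_not.1 fun h => hω (subset_toMeasurable _ _ h)
      simpa only [hω, if_false] using hωcont.comp' (continuous_id'.max continuous_const)
  · filter_upwards [hN] with ω hω t ht
    rw [if_neg hω, max_eq_left ht]

lemma ae_volume_setOf_mem_eq_zero [SFinite μ] (hD : ∀ t, 0 ≤ t → Measurable (D t))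
    (hcont : ∀ᵐ ω ∂μ, Continuous fun t => D t ω) {A : Set E} (hA : MeasurableSet A)
    (hnull : ∀ t, 0 < t → ∀ᵐ ω ∂μ, D t ω ∉ A) :
    ∀ᵐ ω ∂μ, volume {t | 0 ≤ t ∧ D t ω ∈ A} = 0 := by
  obtain ⟨D', hD', hDD'⟩ := exists_measurable_uncurry_ae_eq_of_continuous hD hcont
  have hmeas : MeasurableSet {p : ℝ × Ω | 0 < p.1 → D' p.1 p.2 ∉ A} :=
    (measurableSet_lt measurable_const measurable_fst).imp (hD' hA).compl
  have htime : ∀ᵐ t : ℝ, ∀ᵐ ω ∂μ, 0 < t → D' t ω ∉ A := ae_of_all _ fun t => by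
    by_cases ht : 0 < t
    · filter_upwards [hnull t ht, hDD'] with ω hω heq _
      rwa [heq t ht.le]
    · exact ae_of_all _ fun ω h => absurd h ht
  filter_upwards [(Measure.ae_ae_comm hmeas).1 htime, hDD'] with ω hω heq
  rw [measure_eq_zero_iff_ae_notMem]
  filter_upwards [hω, Measure.ae_ne volume (0 : ℝ)] with t ht ht0 hmem
  exact ht (hmem.1.lt_of_ne' ht0) (heq t hmem.1 ▸ hmem.2)

end OccupationTime

section Brownian

variable {μ : Measure Ω} {F : ℝ → MeasurableSpace Ω} {B₁ B₂ H₁ H₂ I : ℝ → Ω → ℝ} {κ : ℝ}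

-- At scale `δ = T / 2 ^ k` the drift contributes `O(δ)`, while the conditional law of the
-- increment of the stochastic integral is spread over `√δ`.
lemma IsPlanarBM.measureReal_eq_le_of_lipschitzOnWith_sub [IsProbabilityMeasure μ]
    (hB : IsPlanarBM μ F B₁ B₂)
    (hH₁ : ∀ t, 0 ≤ t → Measurable[F t] (H₁ t)) (hH₂ : ∀ t, 0 ≤ t → Measurable[F t] (H₂ t))
    (hH : ∀ t ω, H₁ t ω ^ 2 + H₂ t ω ^ 2 = κ) (hκ : 0 < κ) (hI : IsSI2 μ H₁ B₁ H₂ B₂ I)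
    {D : ℝ → Ω → ℝ} (hD : ∀ t, 0 ≤ t → Measurable[F t] (D t)) {C : NNReal}
    (hDI : ∀ᵐ ω ∂μ, LipschitzOnWith C (fun t => D t ω - I t ω) (Ici 0))
    {T : ℝ} (hT : 0 < T) (c : ℝ) (k : ℕ) :
    μ.real {ω | D T ω = c} ≤ Real.exp (1 / 2) * ((C + 1) / √κ) * √(T / 2 ^ k) := by
  set δ := T / 2 ^ k
  have hδ : 0 < δ := by positivity
  have hs : 0 ≤ T - δ := sub_nonneg.2 (div_le_self hT.le (one_le_pow₀ one_le_two))
  have hV : Measurable[F (T - δ)] fun ω => D (T - δ) ω - c := (hD _ hs).sub_const c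
  have hY : AEMeasurable (fun ω => D (T - δ) ω - c + (I T ω - I (T - δ) ω)) μ :=
    (hV.mono (hB.1.le _) le_rfl).aemeasurable.add
      ((hB.aemeasurable_of_isSI2 hH₁ hH₂ hI hT.le).sub
        (hB.aemeasurable_of_isSI2 hH₁ hH₂ hI hs))
  have hball := measureReal_abs_le_le_of_norm_charFun_le
    (μ.map fun ω => D (T - δ) ω - c + (I T ω - I (T - δ) ω)) (c := (C + 1) * δ)
    (by positivity) (mul_pos hκ hδ)
    (hB.norm_charFun_map_add_sub_le_of_isSI2 hH₁ hH₂ hH hI hT.le k hV)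
  rw [map_measureReal_apply_of_aemeasurable hY (measurableSet_le (by fun_prop) (by fun_prop))]
    at hball
  calc μ.real {ω | D T ω = c}
      ≤ μ.real {ω | |D (T - δ) ω - c + (I T ω - I (T - δ) ω)| ≤ (C + 1) * δ} := by
        refine ENNReal.toReal_mono (measure_ne_top _ _) (measure_mono_ae ?_)
        filter_upwards [hDI] with ω hω (hDT : D T ω = c)
        have hdist := hω.dist_le_mul _ hs _ hT.le
        rw [Real.dist_eq, Real.dist_eq, sub_sub_cancel_left, abs_neg, abs_of_pos hδ, hDT] at hdist
        change |_| ≤ _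
        calc _ = |D (T - δ) ω - I (T - δ) ω - (c - I T ω)| := by ring_nf
          _ ≤ C * δ := hdist
          _ ≤ (C + 1) * δ := by gcongr; linarith
    _ ≤ Real.exp (1 / 2) * ((C + 1) * δ / √(κ * δ)) := hball
    _ = Real.exp (1 / 2) * ((C + 1) / √κ) * √δ := by
        rw [Real.sqrt_mul hκ.le, mul_div_mul_comm, Real.div_sqrt, mul_assoc]

lemma IsPlanarBM.ae_ne_of_lipschitzOnWith_sub [IsProbabilityMeasure μ]
    (hB : IsPlanarBM μ F B₁ B₂)
    (hH₁ : ∀ t, 0 ≤ t → Measurable[F t] (H₁ t)) (hH₂ : ∀ t, 0 ≤ t → Measurable[F t] (H₂ t))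
    (hH : ∀ t ω, H₁ t ω ^ 2 + H₂ t ω ^ 2 = κ) (hκ : 0 < κ) (hI : IsSI2 μ H₁ B₁ H₂ B₂ I)
    {D : ℝ → Ω → ℝ} (hD : ∀ t, 0 ≤ t → Measurable[F t] (D t)) {C : NNReal}
    (hDI : ∀ᵐ ω ∂μ, LipschitzOnWith C (fun t => D t ω - I t ω) (Ici 0))
    {T : ℝ} (hT : 0 < T) (c : ℝ) : ∀ᵐ ω ∂μ, D T ω ≠ c := by
  have hlim := (tendsto_const_div_two_pow T).sqrt.const_mul
    (Real.exp (1 / 2) * ((C + 1) / √κ))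
  rw [Real.sqrt_zero, mul_zero] at hlim
  rw [ae_iff, ← measureReal_eq_zero_iff]
  simpa using (ge_of_tendsto' hlim
    (hB.measureReal_eq_le_of_lipschitzOnWith_sub hH₁ hH₂ hH hκ hI hD hDI hT c)).antisymm
      measureReal_nonneg

end Brownian

theorem coincidence_set_lebesgue_null_general
    (g h ρ σ : ℝ) (hρσ : ρ ^ 2 + σ ^ 2 ≠ 0) (x₁ x₂ : ℝ)
    {μ : Measure Ω} [IsProbabilityMeasure μ]
    {F : ℝ → MeasurableSpace Ω} {B₁ B₂ X₁ X₂ : ℝ → Ω → ℝ}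
    (hBM : IsPlanarBM μ F B₁ B₂)
    (hsol : Solves11 μ F g h ρ σ x₁ x₂ B₁ B₂ X₁ X₂) :
    ∀ᵐ ω ∂μ, volume {t : ℝ | 0 ≤ t ∧ X₁ t ω = X₂ t ω} = 0 := by
  obtain ⟨hadapted, hcont, I₁, I₂, hI₁, hI₂, heq⟩ := hsol
  have hX (t : ℝ) (ht : 0 ≤ t) : Measurable[F t] fun ω => (X₁ t ω, X₂ t ω) :=
    measurable_iff_comap_le.2 (hadapted t ht)
  have hite (a b : ℝ) (t : ℝ) (ht : 0 ≤ t) :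
      Measurable[F t] fun ω => if X₁ t ω ≤ X₂ t ω then a else b :=
    .ite (hX t ht (measurableSet_le measurable_fst measurable_snd)) measurable_const
      measurable_const
  have hD (t : ℝ) (ht : 0 ≤ t) : Measurable[F t] fun ω => X₁ t ω - X₂ t ω :=
    (measurable_fst.sub measurable_snd).comp (hX t ht)
  have hdrift : ∀ᵐ ω ∂μ, LipschitzOnWith (max ‖g‖₊ ‖-h‖₊ + max ‖-h‖₊ ‖g‖₊)
      (fun t => X₁ t ω - X₂ t ω - (I₁ t ω - I₂ t ω)) (Ici 0) := by
    filter_upwards [hcont, heq] with ω hωcont hωeq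
    exact lipschitzOnWith_sub_of_eq_integral_ite_add hωcont.1 hωcont.2 hωeq
  have hne (T : ℝ) (hT : 0 < T) : ∀ᵐ ω ∂μ, X₁ T ω - X₂ T ω ≠ 0 :=
    hBM.ae_ne_of_lipschitzOnWith_sub (hite σ ρ) (fun t ht => (hite ρ σ t ht).fun_neg)
      (κ := ρ ^ 2 + σ ^ 2) (fun t ω => by split_ifs <;> ring) (by positivity) (hI₁.sub hI₂)
      hD hdrift hT 0
  simpa only [mem_singleton_iff, sub_eq_zero] using ae_volume_setOf_mem_eq_zero
    (fun t ht => (hD t ht).mono (hBM.1.le t) le_rfl)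
    (hcont.mono fun ω hω => hω.1.sub hω.2) (measurableSet_singleton 0) hne

/-- Remark 3 of the paper. For any weak solution of the system
(1.1)-(1.2), the set of times at which the two components coincide is almost surely
Lebesgue-null. -/
theorem coincidence_set_lebesgue_null
    (g h ρ σ : ℝ) (hg : 0 ≤ g) (hh : 0 ≤ h) (hρ : 0 ≤ ρ) (hσ : 0 ≤ σ)
    (hnorm : ρ ^ 2 + σ ^ 2 = 1) (hgh : 0 < g + h) (x₁ x₂ : ℝ)
    {Ω : Type*} [mΩ : MeasurableSpace Ω] (μ : Measure Ω) [IsProbabilityMeasure μ]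
    (F : ℝ → MeasurableSpace Ω) (B₁ B₂ X₁ X₂ : ℝ → Ω → ℝ)
    (hBM : IsPlanarBM μ F B₁ B₂)
    (hsol : Solves11 μ F g h ρ σ x₁ x₂ B₁ B₂ X₁ X₂) :
    ∀ᵐ ω ∂μ, volume {t : ℝ | 0 ≤ t ∧ X₁ t ω = X₂ t ω} = 0 :=
  coincidence_set_lebesgue_null_general g h ρ σ (hnorm ▸ one_ne_zero) x₁ x₂ hBM hsol

end SDEPaper
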